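/- arXiv:1402.3842 — 3 statements merged into one kernel-verified Lean document; each statement's English description precedes it below -/
import Mathlib

section
/- For every natural number n, the number of permutations of length n avoiding both of the patterns 1324 and 3416725 equals the number of permutations of length n avoiding the pattern 1234. In other words, the set of patterns {1324, 3416725} is Wilf-equivalent to the pattern 1234. -/
/-- `π` contains the pattern `σ`: there is a strictly increasing choice of positions
on which `π` is order-isomorphic to `σ`. -/
def Contains {n k : ℕ} (π : Equiv.Perm (Fin n)) (σ : Equiv.Perm (Fin k)) : Prop :=
  ∃ f : Fin k → Fin n, StrictMono f ∧ ∀ a b : Fin k, σ a < σ b ↔ π (f a) < π (f b)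

/-- `π` avoids the pattern `σ`. -/
def Avoids {n k : ℕ} (π : Equiv.Perm (Fin n)) (σ : Equiv.Perm (Fin k)) : Prop :=
  ¬ Contains π σ
noncomputable def p1234 : Equiv.Perm (Fin 4) := Equiv.ofBijective ![0, 1, 2, 3] (by decide)
noncomputable def p1324 : Equiv.Perm (Fin 4) := Equiv.ofBijective ![0, 2, 1, 3] (by decide)
noncomputable def p3416725 : Equiv.Perm (Fin 7) := Equiv.ofBijective ![2, 3, 0, 5, 6, 1, 4] (by decide)


namespace WilfAux

open Equiv

variable {n : ℕ}

/-- There is an entry of `π` strictly to the left of and below `(p, v)`. -/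
def SL (π : Perm (Fin n)) (p v : Fin n) : Prop := ∃ i, i < p ∧ π i < v

/-- There is an entry of `π` strictly to the right of and above `(p, v)`. -/
def SU (π : Perm (Fin n)) (p v : Fin n) : Prop := ∃ i, p < i ∧ v < π i

/-- The set of left-to-right minima. -/
def LM (π : Perm (Fin n)) : Set (Fin n × Fin n) := {x | π x.1 = x.2 ∧ ¬ SL π x.1 x.2}

/-- The set of right-to-left maxima. -/
def RM (π : Perm (Fin n)) : Set (Fin n × Fin n) := {x | π x.1 = x.2 ∧ ¬ SU π x.1 x.2}

/-- The invariant. -/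
def key (π : Perm (Fin n)) : Set (Fin n × Fin n) × Set (Fin n × Fin n) := (LM π, RM π)

lemma SL_min (π : Perm (Fin n)) (p v : Fin n) (h : SL π p v) :
    ∃ i, i < p ∧ π i < v ∧ ¬ SL π i (π i) := by
  induction p using WellFoundedLT.induction generalizing v with
  | ind p ih =>
    obtain ⟨i, hi, hv⟩ := h
    by_cases hs : SL π i (π i)
    · obtain ⟨j, hj, hjv, hjs⟩ := ih i hi (π i) hs
      exact ⟨j, hj.trans hi, hjv.trans hv, hjs⟩
    · exact ⟨i, hi, hv, hs⟩

lemma SU_max (π : Perm (Fin n)) (p v : Fin n) (h : SU π p v) :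
    ∃ i, p < i ∧ v < π i ∧ ¬ SU π i (π i) := by
  induction p using WellFoundedGT.induction generalizing v with
  | ind p ih =>
    obtain ⟨i, hi, hv⟩ := h
    by_cases hs : SU π i (π i)
    · obtain ⟨j, hj, hjv, hjs⟩ := ih i hi (π i) hs
      exact ⟨j, hi.trans hj, hv.trans hjv, hjs⟩
    · exact ⟨i, hi, hv, hs⟩

lemma SL_of_LM {π τ : Perm (Fin n)} (h : LM π = LM τ) {p v : Fin n} (hs : SL π p v) :
    SL τ p v := by
  obtain ⟨i, hi, hv, hm⟩ := SL_min π p v hs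
  have : (i, π i) ∈ LM τ := h ▸ (⟨rfl, hm⟩ : (i, π i) ∈ LM π)
  exact ⟨i, hi, by rw [this.1]; exact hv⟩

lemma SU_of_RM {π τ : Perm (Fin n)} (h : RM π = RM τ) {p v : Fin n} (hs : SU π p v) :
    SU τ p v := by
  obtain ⟨i, hi, hv, hm⟩ := SU_max π p v hs
  have : (i, π i) ∈ RM τ := h ▸ (⟨rfl, hm⟩ : (i, π i) ∈ RM π)
  exact ⟨i, hi, by rw [this.1]; exact hv⟩

lemma SL_of_ne {π τ : Perm (Fin n)} (h : LM π = LM τ) {p : Fin n} (hne : π p ≠ τ p) :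
    SL π p (π p) := by
  by_contra hs
  have : (p, π p) ∈ LM τ := h ▸ (⟨rfl, hs⟩ : (p, π p) ∈ LM π)
  exact hne this.1.symm

lemma SU_of_ne {π τ : Perm (Fin n)} (h : RM π = RM τ) {p : Fin n} (hne : π p ≠ τ p) :
    SU π p (π p) := by
  by_contra hs
  have : (p, π p) ∈ RM τ := h ▸ (⟨rfl, hs⟩ : (p, π p) ∈ RM π)
  exact hne this.1.symm

lemma LM_eq {π τ : Perm (Fin n)}
    (h : ∀ i, τ i = π i ∨ (SL π i (π i) ∧ SL π i (τ i))) : LM τ = LM π := by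
  ext ⟨i, w⟩
  constructor
  · rintro ⟨hw, hs⟩
    simp only at hs hw
    subst hw
    have key : ∀ hh : SL π i (τ i), False := by
      intro hh
      obtain ⟨k, hk, hkv, hkm⟩ := SL_min π _ _ hh
      rcases h k with e | e
      · exact hs ⟨k, hk, by rw [e]; exact hkv⟩
      · exact hkm e.1
    rcases h i with e | e
    · exact ⟨e.symm, key⟩
    · exact (key e.2).elim
  · rintro ⟨hw, hs⟩
    simp only at hs hw
    subst hw
    rcases h i with e | e
    · refine ⟨e, ?_⟩
      rintro ⟨j, hj, hjv⟩
      simp only at hj hjv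
      rcases h j with e' | e'
      · exact hs ⟨j, hj, e' ▸ hjv⟩
      · obtain ⟨k, hk, hkv⟩ := e'.2
        exact hs ⟨k, hk.trans hj, hkv.trans hjv⟩
    · exact (hs e.1).elim

lemma RM_eq {π τ : Perm (Fin n)}
    (h : ∀ i, τ i = π i ∨ (SU π i (π i) ∧ SU π i (τ i))) : RM τ = RM π := by
  ext ⟨i, w⟩
  constructor
  · rintro ⟨hw, hs⟩
    simp only at hs hw
    subst hw
    have key : ∀ hh : SU π i (τ i), False := by
      intro hh
      obtain ⟨k, hk, hkv, hkm⟩ := SU_max π _ _ hh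
      rcases h k with e | e
      · exact hs ⟨k, hk, by rw [e]; exact hkv⟩
      · exact hkm e.1
    rcases h i with e | e
    · exact ⟨e.symm, key⟩
    · exact (key e.2).elim
  · rintro ⟨hw, hs⟩
    simp only at hs hw
    subst hw
    rcases h i with e | e
    · refine ⟨e, ?_⟩
      rintro ⟨j, hj, hjv⟩
      simp only at hj hjv
      rcases h j with e' | e'
      · exact hs ⟨j, hj, e' ▸ hjv⟩
      · obtain ⟨k, hk, hkv⟩ := e'.2
        exact hs ⟨k, hj.trans hk, hjv.trans hkv⟩
    · exact (hs e.1).elim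

/-! ### Pattern containment, made explicit -/

lemma contains_of {k : ℕ} (π : Perm (Fin n)) (σ : Perm (Fin k)) (f : Fin k → Fin n)
    (g : Fin k → Fin k) (hf : StrictMono f) (hg : ∀ a, g (σ a) = a)
    (hm : StrictMono fun j => π (f (g j))) : Contains π σ := by
  refine ⟨f, hf, fun a b => ?_⟩
  have := hm.lt_iff_lt (a := σ a) (b := σ b)
  simp only [hg] at this
  exact this.symm

lemma c1234 (π : Perm (Fin n)) : Contains π p1234 ↔ ∃ a b c d, a < b ∧ b < c ∧ c < d ∧
    π a < π b ∧ π b < π c ∧ π c < π d := by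
  constructor
  · rintro ⟨f, hf, h⟩
    exact ⟨f 0, f 1, f 2, f 3, hf (by decide), hf (by decide), hf (by decide),
      (h 0 1).1 (by simp [p1234]), (h 1 2).1 (by simp [p1234]), (h 2 3).1 (by simp [p1234])⟩
  · rintro ⟨a, b, c, d, h1, h2, h3, h4, h5, h6⟩
    refine contains_of π _ ![a, b, c, d] ![0, 1, 2, 3] ?_ ?_ ?_
    · rw [Fin.strictMono_iff_lt_succ]
      intro i; fin_cases i <;> assumption
    · intro i; fin_cases i <;> simp [p1234]
    · rw [Fin.strictMono_iff_lt_succ]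
      intro i; fin_cases i <;> assumption

lemma c1324 (π : Perm (Fin n)) : Contains π p1324 ↔ ∃ a b c d, a < b ∧ b < c ∧ c < d ∧
    π a < π c ∧ π c < π b ∧ π b < π d := by
  constructor
  · rintro ⟨f, hf, h⟩
    exact ⟨f 0, f 1, f 2, f 3, hf (by decide), hf (by decide), hf (by decide),
      (h 0 2).1 (by simp [p1324]), (h 2 1).1 (by simp [p1324]), (h 1 3).1 (by simp [p1324])⟩
  · rintro ⟨a, b, c, d, h1, h2, h3, h4, h5, h6⟩
    refine contains_of π _ ![a, b, c, d] ![0, 2, 1, 3] ?_ ?_ ?_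
    · rw [Fin.strictMono_iff_lt_succ]
      intro i; fin_cases i <;> assumption
    · intro i; fin_cases i <;> simp [p1324]
    · rw [Fin.strictMono_iff_lt_succ]
      intro i; fin_cases i <;> assumption

lemma c7 (π : Perm (Fin n)) : Contains π p3416725 ↔ ∃ a b c d e f g,
    (a < b ∧ b < c ∧ c < d ∧ d < e ∧ e < f ∧ f < g) ∧
    π c < π f ∧ π f < π a ∧ π a < π b ∧ π b < π g ∧ π g < π d ∧ π d < π e := by
  constructor
  · rintro ⟨f, hf, h⟩
    exact ⟨f 0, f 1, f 2, f 3, f 4, f 5, f 6, ⟨hf (by decide), hf (by decide), hf (by decide),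
      hf (by decide), hf (by decide), hf (by decide)⟩,
      (h 2 5).1 (by simp [p3416725]), (h 5 0).1 (by simp [p3416725]),
      (h 0 1).1 (by simp [p3416725]), (h 1 6).1 (by simp [p3416725]),
      (h 6 3).1 (by simp [p3416725]), (h 3 4).1 (by simp [p3416725])⟩
  · rintro ⟨a, b, c, d, e, f, g, ⟨h1, h2, h3, h4, h5, h6⟩, h7, h8, h9, h10, h11, h12⟩
    refine contains_of π _ ![a, b, c, d, e, f, g] ![2, 5, 0, 1, 6, 3, 4] ?_ ?_ ?_
    · rw [Fin.strictMono_iff_lt_succ]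
      intro i; fin_cases i <;> assumption
    · intro i; fin_cases i <;> simp [p3416725]
    · rw [Fin.strictMono_iff_lt_succ]
      intro i; fin_cases i <;> assumption

/-! ### The lexicographic order on inverses -/

/-- `π` precedes `τ` in the lexicographic order of inverses. -/
def LexLt (π τ : Perm (Fin n)) : Prop :=
  ∃ v, (∀ u, u < v → π.symm u = τ.symm u) ∧ π.symm v < τ.symm v

lemma lex_tri (π τ : Perm (Fin n)) (h : π ≠ τ) : LexLt π τ ∨ LexLt τ π := by
  have hne : ∃ v, π.symm v ≠ τ.symm v := by
    by_contra hc
    push Not at hc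
    apply h
    have : π.symm = τ.symm := Equiv.ext hc
    rw [← Equiv.symm_symm π, this, Equiv.symm_symm]
  obtain ⟨v, hv, hmin⟩ := WellFounded.has_min (wellFounded_lt (α := Fin n))
    {v | π.symm v ≠ τ.symm v} hne
  have hag : ∀ u, u < v → π.symm u = τ.symm u := by
    intro u hu
    by_contra hc
    exact hmin u hc hu
  rcases lt_or_gt_of_ne hv with h1 | h1
  · exact Or.inl ⟨v, hag, h1⟩
  · exact Or.inr ⟨v, fun u hu => (hag u hu).symm, h1⟩

lemma lexLt_irrefl (π : Perm (Fin n)) : ¬ LexLt π π := fun ⟨_, _, h⟩ => lt_irrefl _ h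

lemma lexLt_trans {π τ ρ : Perm (Fin n)} (h1 : LexLt π τ) (h2 : LexLt τ ρ) : LexLt π ρ := by
  obtain ⟨v, hv, hv'⟩ := h1
  obtain ⟨w, hw, hw'⟩ := h2
  rcases lt_trichotomy v w with h | h | h
  · exact ⟨v, fun u hu => (hv u hu).trans (hw u (hu.trans h)), (hw v h) ▸ hv'⟩
  · subst h
    exact ⟨v, fun u hu => (hv u hu).trans (hw u hu), hv'.trans hw'⟩
  · exact ⟨w, fun u hu => (hv u (hu.trans h)).trans (hw u hu), (hv w h) ▸ hw'⟩

lemma lexLt_wf : WellFounded (LexLt (n := n)) := by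
  have : IsTrans (Perm (Fin n)) LexLt := ⟨fun _ _ _ => lexLt_trans⟩
  have : Std.Irrefl (LexLt (n := n)) := ⟨lexLt_irrefl⟩
  exact Finite.wellFounded_of_trans_of_irrefl _

lemma lexGt_wf : WellFounded (fun π τ : Perm (Fin n) => LexLt τ π) := by
  have : IsTrans (Perm (Fin n)) (fun π τ => LexLt τ π) := ⟨fun _ _ _ h h' => lexLt_trans h' h⟩
  have : Std.Irrefl (fun π τ : Perm (Fin n) => LexLt τ π) := ⟨lexLt_irrefl⟩
  exact Finite.wellFounded_of_trans_of_irrefl _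

/-! ### Local moves -/

lemma swap_key (π : Perm (Fin n)) {a b c d : Fin n} (hab : a < b) (hbc : b < c) (hcd : c < d)
    (h1 : π a < π b) (h2 : π a < π c) (h3 : π b < π d) (h4 : π c < π d) :
    key (π * swap b c) = key π := by
  have h : ∀ i, (i = b ∧ (π * swap b c) i = π c) ∨ (i = c ∧ (π * swap b c) i = π b) ∨
      (π * swap b c) i = π i := by
    intro i
    by_cases hb : i = b
    · left; subst hb; simp
    · by_cases hc : i = c
      · right; left; subst hc; simp
      · right; right; simp [swap_apply_of_ne_of_ne hb hc]
  have hac := hab.trans hbc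
  have hbd := hbc.trans hcd
  unfold key
  rw [LM_eq (π := π), RM_eq (π := π)]
  · intro i
    rcases h i with ⟨rfl, e⟩ | ⟨rfl, e⟩ | e
    · right; rw [e]; exact ⟨⟨d, hbd, h3⟩, ⟨d, hbd, h4⟩⟩
    · right; rw [e]; exact ⟨⟨d, hcd, h4⟩, ⟨d, hcd, h3⟩⟩
    · left; exact e
  · intro i
    rcases h i with ⟨rfl, e⟩ | ⟨rfl, e⟩ | e
    · right; rw [e]; exact ⟨⟨a, hab, h1⟩, ⟨a, hab, h2⟩⟩
    · right; rw [e]; exact ⟨⟨a, hac, h2⟩, ⟨a, hac, h1⟩⟩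
    · left; exact e

/-- If `τ` moves the value `v` left and agrees with `π` on positions of smaller values. -/
lemma lexLt_of (π τ : Perm (Fin n)) (b c : Fin n) (hbc : b < c) (hb : τ b = π c)
    (h : ∀ i, π i < π c → τ i = π i) : LexLt τ π := by
  refine ⟨π c, ?_, ?_⟩
  · intro u hu
    have := h (π.symm u) (by simpa using hu)
    rw [Equiv.symm_apply_eq, this]
    simp
  · rw [← hb]
    simp only [Equiv.symm_apply_apply]
    rw [hb]
    simpa using hbc

lemma exists_1234 (π : Perm (Fin n)) : ∃ τ, key τ = key π ∧ Avoids τ p1234 := by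
  obtain ⟨τ, hτ, hmin⟩ := WellFounded.has_min (lexGt_wf (n := n)) {τ | key τ = key π} ⟨π, rfl⟩
  refine ⟨τ, hτ, fun hc => ?_⟩
  rw [c1234] at hc
  obtain ⟨a, b, c, d, hab, hbc, hcd, h1, h2, h3⟩ := hc
  refine hmin (τ * swap b c) ?_ ?_
  · exact (swap_key τ hab hbc hcd h1 (h1.trans h2) (h2.trans h3) h3).trans hτ
  · refine lexLt_of (τ * swap b c) τ b c hbc (by simp) ?_
    intro i hi
    simp only [Perm.mul_apply, swap_apply_right] at hi ⊢
    by_cases hib : i = b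
    · subst hib; simp at hi; exact absurd hi (not_lt.2 h2.le)
    · by_cases hic : i = c
      · subst hic; simp at hi
      · rw [swap_apply_of_ne_of_ne hib hic]

lemma exists_1324 (π : Perm (Fin n)) :
    ∃ τ, key τ = key π ∧ Avoids τ p1324 ∧ Avoids τ p3416725 := by
  obtain ⟨τ, hτ, hmin⟩ := WellFounded.has_min (lexLt_wf (n := n)) {τ | key τ = key π} ⟨π, rfl⟩
  refine ⟨τ, hτ, fun hc => ?_, fun hc => ?_⟩
  · rw [c1324] at hc
    obtain ⟨a, b, c, d, hab, hbc, hcd, h1, h2, h3⟩ := hc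
    refine hmin (τ * swap b c) ?_ ?_
    · exact (swap_key τ hab hbc hcd (h1.trans h2) h1 h3 (h2.trans h3)).trans hτ
    · refine lexLt_of τ (τ * swap b c) b c hbc (by simp) ?_
      intro i hi
      have hib : i ≠ b := by rintro rfl; exact absurd hi (not_lt.2 h2.le)
      have hic : i ≠ c := by rintro rfl; exact lt_irrefl _ hi
      simp [swap_apply_of_ne_of_ne hib hic]
  · rw [c7] at hc
    obtain ⟨a, b, c, d, e, f, g, ⟨h1, h2, h3, h4, h5, h6⟩, h7, h8, h9, h10, h11, h12⟩ := hc
    have hbd : b ≠ d := (h2.trans h3).ne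
    have hdf : d ≠ f := (h4.trans h5).ne
    have hbf : b ≠ f := (h2.trans (h3.trans (h4.trans h5))).ne
    obtain ⟨ρ, hρ⟩ : ∃ ρ : Perm (Fin n), ρ = τ * (swap b d * swap d f) := ⟨_, rfl⟩
    have eb : ρ b = τ d := by
      simp [hρ, swap_apply_of_ne_of_ne hbd hbf]
    have ed : ρ d = τ f := by
      simp [hρ, swap_apply_of_ne_of_ne hbf.symm hdf.symm]
    have ef : ρ f = τ b := by
      simp [hρ]
    have eo : ∀ i, i ≠ b → i ≠ d → i ≠ f → ρ i = τ i := by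
      intro i hb hd hf
      simp [hρ, swap_apply_of_ne_of_ne hd hf, swap_apply_of_ne_of_ne hb hd]
    have h : ∀ i, (i = b ∧ ρ i = τ d) ∨ (i = d ∧ ρ i = τ f) ∨ (i = f ∧ ρ i = τ b) ∨
        ρ i = τ i := by
      intro i
      by_cases hb : i = b
      · left; subst hb; exact ⟨rfl, eb⟩
      by_cases hd : i = d
      · right; left; subst hd; exact ⟨rfl, ed⟩
      by_cases hf : i = f
      · right; right; left; subst hf; exact ⟨rfl, ef⟩
      · right; right; right; exact eo i hb hd hf
    refine hmin ρ ?_ ?_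
    · refine Eq.trans ?_ hτ
      unfold key
      rw [LM_eq (π := τ), RM_eq (π := τ)]
      · intro i
        rcases h i with ⟨rfl, e'⟩ | ⟨rfl, e'⟩ | ⟨rfl, e'⟩ | e'
        · right; rw [e']; exact ⟨⟨e, by order, by order⟩, ⟨e, by order, by order⟩⟩
        · right; rw [e']; exact ⟨⟨e, by order, by order⟩, ⟨e, by order, by order⟩⟩
        · right; rw [e']; exact ⟨⟨g, by order, by order⟩, ⟨g, by order, by order⟩⟩
        · left; exact e'
      · intro i
        rcases h i with ⟨rfl, e'⟩ | ⟨rfl, e'⟩ | ⟨rfl, e'⟩ | e'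
        · right; rw [e']; exact ⟨⟨a, by order, by order⟩, ⟨a, by order, by order⟩⟩
        · right; rw [e']; exact ⟨⟨c, by order, by order⟩, ⟨c, by order, by order⟩⟩
        · right; rw [e']; exact ⟨⟨c, by order, by order⟩, ⟨c, by order, by order⟩⟩
        · left; exact e'
    · refine lexLt_of τ ρ d f (by order) ed ?_
      intro i hi
      refine eo i ?_ ?_ ?_ <;> rintro rfl <;> order

/-! ### Uniqueness -/

lemma uniq_1234_aux (π τ : Perm (Fin n)) (hk : key π = key τ)
    (hτ : Avoids τ p1234) : ¬ LexLt τ π := by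
  rintro ⟨v, hag, hlt⟩
  have hL : LM π = LM τ := congrArg Prod.fst hk
  have hR : RM π = RM τ := congrArg Prod.snd hk
  obtain ⟨p, rfl⟩ := τ.surjective v
  obtain ⟨p', hp'⟩ := π.surjective (τ p)
  have hps : π.symm (τ p) = p' := by rw [← hp']; simp
  rw [hps, Equiv.symm_apply_apply] at hlt
  have hx : τ p < τ p' := by
    rcases lt_trichotomy (τ p) (τ p') with h | h | h
    · exact h
    · exact absurd (τ.injective h) hlt.ne
    · have := hag _ h
      rw [Equiv.symm_apply_apply, Equiv.eq_symm_apply, hp'] at this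
      exact absurd this h.ne'
  have n1 : τ p ≠ π p := by
    intro h; rw [← hp'] at h; exact hlt.ne (π.injective h).symm
  have n2 : τ p' ≠ π p' := by rw [hp']; exact hx.ne'
  obtain ⟨a, ha, ha'⟩ := SL_of_ne hL.symm n1
  obtain ⟨d, hd, hd'⟩ := SU_of_ne hR.symm n2
  exact hτ ((c1234 τ).2 ⟨a, p, p', d, ha, hlt, hd, ha', hx, hd'⟩)

lemma uniq_1324_aux (π τ : Perm (Fin n)) (hk : key π = key τ)
    (hπ : Avoids π p1324) (hπ' : Avoids π p3416725) : ¬ LexLt τ π := by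
  rintro ⟨v, hag, hlt⟩
  have hL : LM π = LM τ := congrArg Prod.fst hk
  have hR : RM π = RM τ := congrArg Prod.snd hk
  have av : ∀ a b c d, a < b → b < c → c < d → π a < π c → π c < π b → π b < π d → False :=
    fun a b c d h1 h2 h3 h4 h5 h6 => hπ ((c1324 π).2 ⟨a, b, c, d, h1, h2, h3, h4, h5, h6⟩)
  obtain ⟨p, hp⟩ := τ.surjective v
  obtain ⟨p', hp'⟩ := π.surjective v
  have hps : π.symm v = p' := by rw [← hp']; simp
  have hpt : τ.symm v = p := by rw [← hp]; simp
  rw [hps, hpt] at hlt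
  have n1 : τ p ≠ π p := by
    intro h; rw [hp, ← hp'] at h; exact hlt.ne (π.injective h).symm
  have hw : v < π p := by
    rcases lt_trichotomy v (π p) with h | h | h
    · exact h
    · rw [hp] at n1; exact absurd h n1
    · have := hag _ h
      rw [Equiv.symm_apply_apply, Equiv.symm_apply_eq] at this
      exact absurd this.symm n1
  have hSL : SL π p v := by
    have := SL_of_ne hL.symm n1
    rw [hp] at this
    exact SL_of_LM hL.symm this
  have hSUp : SU π p (π p) := SU_of_ne hR n1.symm
  have hnSU : ¬ SU π p' (π p) := by
    rintro ⟨d, hd, hd'⟩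
    obtain ⟨a, ha, ha'⟩ := hSL
    exact av a p p' d ha hlt hd (hp' ▸ ha') (hp' ▸ hw) hd'
  obtain ⟨u, hu1, hu2⟩ : ∃ u, p' ≤ τ.symm u ∧ π.symm u < p' := by
    by_contra hc
    push Not at hc
    let A : Finset (Fin n) := (Finset.Ici p').map τ.toEmbedding
    let B : Finset (Fin n) := (Finset.Ici p').map π.toEmbedding
    have hAB : A ⊂ B := by
      rw [Finset.ssubset_iff_of_subset]
      · refine ⟨v, ?_, ?_⟩
        · simp only [B, Finset.mem_map_equiv, Finset.mem_Ici]
          rw [hps]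
        · simp only [A, Finset.mem_map_equiv, Finset.mem_Ici]
          rw [hpt]; exact not_le.2 hlt
      · intro x hx
        simp only [A, B, Finset.mem_map_equiv, Finset.mem_Ici] at hx ⊢
        exact hc x hx
    have := Finset.card_lt_card hAB
    simp [A, B] at this
  have hvu : v < u := by
    rcases lt_trichotomy v u with h | h | h
    · exact h
    · rw [← h, hpt] at hu1; exact absurd hlt (not_lt.2 hu1)
    · rw [hag u h] at hu1; exact absurd hu2 (not_lt.2 hu1)
  obtain ⟨c, rfl⟩ := τ.surjective u
  rw [Equiv.symm_apply_apply] at hu1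
  obtain ⟨r, hr⟩ := π.surjective (τ c)
  rw [← hr, Equiv.symm_apply_apply] at hu2
  rw [← hr] at hvu
  have hrc : r ≠ c := (hu2.trans_le hu1).ne
  have hSUu : SU π p' (π r) := by
    have h1 : SU τ c (τ c) := SU_of_ne hR.symm (fun h => hrc (π.injective (hr.trans h)))
    obtain ⟨d, hd, hd'⟩ := SU_of_RM hR.symm h1
    exact ⟨d, hu1.trans_lt hd, hr ▸ hd'⟩
  have hSLr : SL π r (π r) := SL_of_ne hL (fun h => hrc (τ.injective (h.symm.trans hr)))
  have huw : π r < π p := by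
    by_contra h
    obtain ⟨d, hd, hd'⟩ := hSUu
    exact hnSU ⟨d, hd, (not_lt.1 h).trans_lt hd'⟩
  obtain ⟨g, hg, hg'⟩ := hSUu
  obtain ⟨a3, h3, h3'⟩ := hSL
  rcases lt_trichotomy r p with h | h | h
  · obtain ⟨a1, h1, h1'⟩ := hSLr
    obtain ⟨a5, h5, h5'⟩ := hSUp
    have e1 : v < π a1 := by
      rcases lt_trichotomy v (π a1) with hh | hh | hh
      · exact hh
      · rw [← hp'] at hh
        exact absurd (π.injective hh) (h1.trans hu2).ne'
      · exact (av a1 r p' g h1 hu2 hg (hp' ▸ hh) (hp' ▸ hvu) hg').elim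
    have e3 : r < a3 := by
      rcases lt_trichotomy r a3 with hh | hh | hh
      · exact hh
      · subst hh; exact absurd hvu (not_lt.2 h3'.le)
      · exact (av a3 r p' g hh hu2 hg (hp' ▸ h3') (hp' ▸ hvu) hg').elim
    have e5 : a5 < p' := by
      rcases lt_trichotomy a5 p' with hh | hh | hh
      · exact hh
      · subst hh; rw [hp'] at h5'; exact absurd h5' (not_lt.2 hw.le)
      · exact (hnSU ⟨a5, hh, h5'⟩).elim
    have e7 : π g < π p := by
      rcases lt_trichotomy (π g) (π p) with hh | hh | hh
      · exact hh
      · exact absurd (π.injective hh) (hlt.trans hg).ne'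
      · exact (hnSU ⟨g, hg, hh⟩).elim
    exact hπ' ((c7 π).2 ⟨a1, r, a3, p, a5, p', g, ⟨h1, e3, h3, h5, e5, hg⟩,
      hp' ▸ h3', hp' ▸ e1, h1', hg', e7, h5'⟩)
  · subst h; exact lt_irrefl _ huw
  · exact av a3 r p' g (h3.trans h) hu2 hg (hp' ▸ h3') (hp' ▸ hvu) hg'

lemma card_eq (P : Perm (Fin n) → Prop) (hex : ∀ π, ∃ τ, key τ = key π ∧ P τ)
    (huniq : ∀ π τ, key π = key τ → P π → P τ → ¬ LexLt τ π) :
    Nat.card {π : Perm (Fin n) // P π} = Nat.card (Set.range (key (n := n))) := by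
  refine Nat.card_congr (Equiv.ofBijective (fun π => ⟨key π.1, π.1, rfl⟩) ⟨?_, ?_⟩)
  · rintro ⟨π, hπ⟩ ⟨τ, hτ⟩ h
    have h' : key π = key τ := congrArg Subtype.val h
    by_contra hne
    have hne' : π ≠ τ := fun e => hne (Subtype.ext e)
    rcases lex_tri π τ hne' with h1 | h1
    · exact huniq τ π h'.symm hτ hπ h1
    · exact huniq π τ h' hπ hτ h1
  · rintro ⟨_, π, rfl⟩
    obtain ⟨τ, h1, h2⟩ := hex π
    exact ⟨⟨τ, h2⟩, Subtype.ext h1⟩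

end WilfAux

theorem wilf_equiv_1324_3416725_and_1234 (n : ℕ) :
    Nat.card {π : Equiv.Perm (Fin n) // Avoids π p1324 ∧ Avoids π p3416725} =
      Nat.card {π : Equiv.Perm (Fin n) // Avoids π p1234} := by
  rw [WilfAux.card_eq (fun π => Avoids π p1324 ∧ Avoids π p3416725) WilfAux.exists_1324
      (fun π τ hk h _ => WilfAux.uniq_1324_aux π τ hk h.1 h.2),
    WilfAux.card_eq (fun π => Avoids π p1234) WilfAux.exists_1234
      (fun π τ hk _ h => WilfAux.uniq_1234_aux π τ hk h)]
end

section
/- For every natural number n, the number of involutions of length n avoiding both of the patterns 4231 and 5276143 equals the number of involutions of length n avoiding the pattern 4321. -/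
noncomputable def p4321 : Equiv.Perm (Fin 4) := Equiv.ofBijective ![3, 2, 1, 0] (by decide)
noncomputable def p4231 : Equiv.Perm (Fin 4) := Equiv.ofBijective ![3, 1, 2, 0] (by decide)
noncomputable def p5276143 : Equiv.Perm (Fin 7) := Equiv.ofBijective ![4, 1, 6, 5, 0, 3, 2] (by decide)


/-- Motzkin numbers. -/
def motz : ℕ → ℕ
  | 0 => 1
  | 1 => 1
  | n + 2 => motz (n+1) + ∑ i : Fin (n+1), motz i.1 * motz (n - i.1)

noncomputable def serM : PowerSeries ℚ := PowerSeries.mk fun n => (motz n : ℚ)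
noncomputable def serY : PowerSeries ℚ := PowerSeries.X * serM
noncomputable def serZ : PowerSeries ℚ := serY * (1 + serY)⁻¹

theorem serM_eq : serM = 1 + serY + serY ^ 2 := by
  have h : serM = 1 + PowerSeries.X * (serM + PowerSeries.X * (serM * serM)) := by
    ext n
    rcases n with _ | _ | n
    · simp [serM, motz]
    · rw [map_add, PowerSeries.coeff_succ_X_mul]
      simp [serM, motz, PowerSeries.coeff_one]
    · rw [map_add, PowerSeries.coeff_succ_X_mul, map_add, PowerSeries.coeff_succ_X_mul,
        PowerSeries.coeff_mul, Finset.Nat.sum_antidiagonal_eq_sum_range_succ_mk]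
      simp only [serM, PowerSeries.coeff_mk, motz, PowerSeries.coeff_one]
      rw [Finset.sum_range]
      push_cast
      simp
  have : serY = PowerSeries.X * serM := rfl
  rw [this]
  linear_combination h

theorem serY_const : PowerSeries.constantCoeff serY = 0 := by
  simp [serY]

theorem one_add_serY_ne : (1 + serY) ≠ 0 := by
  intro h
  have := congrArg PowerSeries.constantCoeff h
  simp [serY_const] at this

theorem serZ_eq : (1 + serY) * serZ = serY := by
  unfold serZ
  have : (1 + serY) * (1 + serY)⁻¹ = 1 := by
    apply PowerSeries.mul_inv_cancel
    simp [serY_const]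
  linear_combination serY * this

theorem serZ_const : PowerSeries.constantCoeff serZ = 0 := by
  simp [serZ, serY_const]

theorem serY_eq : serY = PowerSeries.X * serM := rfl

theorem serZ_eq2 : serZ = PowerSeries.X * (1 + serZ * serY) := by
  apply mul_left_cancel₀ one_add_serY_ne
  have h1 := serZ_eq
  have h2 := serM_eq
  have h3 := serY_eq
  linear_combination h1 + h3 - PowerSeries.X * serY * h1 + PowerSeries.X * h2

inductive Stp where
  | op : Stp
  | fx : Stp
  | cl (k : ℕ) : Stp

section automaton
variable {S : Type} (al : Stp → S → Prop) (stb : Stp → S → S) (s0 : S)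

def autSt : List Stp → S
  | [] => s0
  | s :: w => stb s (autSt w)

def autAcc : List Stp → Prop
  | [] => True
  | s :: w => autAcc w ∧ al s (autSt stb s0 w)

def autSet (l : ℕ) (γ : S) : Set (List Stp) :=
  {w | w.length = l ∧ autAcc al stb s0 w ∧ autSt stb s0 w = γ}

theorem aut_union (l : ℕ) (c : S → ℕ)
    (hc : ∀ γ, (autSet al stb s0 l γ).encard = (c γ : ℕ∞)) (pr : List (Stp × S)) (hn : pr.Nodup) :
    ({w | ∃ p ∈ pr, ∃ w' ∈ autSet al stb s0 l p.2, w = p.1 :: w'} : Set (List Stp)).encard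
      = ((pr.map fun p => c p.2).sum : ℕ) := by
  induction pr with
  | nil => simp
  | cons p pr ih =>
    have hu : ({w | ∃ q ∈ p :: pr, ∃ w' ∈ autSet al stb s0 l q.2, w = q.1 :: w'} : Set (List Stp))
        = (Set.image (fun u => p.1 :: u) (autSet al stb s0 l p.2)) ∪
          {w | ∃ q ∈ pr, ∃ w' ∈ autSet al stb s0 l q.2, w = q.1 :: w'} := by
      ext w
      simp only [List.mem_cons, Set.mem_ofPred_eq, Set.mem_union, Set.mem_image]
      constructor
      · rintro ⟨q, rfl | hq, w', hw', rfl⟩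
        · exact Or.inl ⟨w', hw', rfl⟩
        · exact Or.inr ⟨q, hq, w', hw', rfl⟩
      · rintro (⟨w', hw', rfl⟩ | ⟨q, hq, w', hw', rfl⟩)
        · exact ⟨p, Or.inl rfl, w', hw', rfl⟩
        · exact ⟨q, Or.inr hq, w', hw', rfl⟩
    rw [hu, Set.encard_union_eq, ih (List.nodup_cons.1 hn).2, Function.Injective.encard_image, hc]
    · simp
    · intro a b h; simpa using h
    · rw [Set.disjoint_left]
      rintro w ⟨w', hw', rfl⟩ ⟨q, hq, w'', hw'', h⟩
      simp only [List.cons.injEq] at h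
      obtain ⟨h1, rfl⟩ := h
      have : p = q := by
        ext1
        · exact h1
        · rw [← hw'.2.2, ← hw''.2.2]
      exact (List.nodup_cons.1 hn).1 (this ▸ hq)

theorem aut_count (wt : S → PowerSeries ℚ)
    (h0 : ∀ γ, (γ = s0 → PowerSeries.coeff 0 (wt γ) = 1) ∧ (γ ≠ s0 → PowerSeries.coeff 0 (wt γ) = 0))
    (H : ∀ γ, ∃ pr : List (Stp × S), pr.Nodup ∧ (∀ s β, (s, β) ∈ pr ↔ al s β ∧ stb s β = γ) ∧
      ∀ l, PowerSeries.coeff (l+1) (wt γ) = (pr.map fun p => PowerSeries.coeff l (wt p.2)).sum)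
    (l : ℕ) : ∃ c : S → ℕ, ∀ γ, (autSet al stb s0 l γ).encard = (c γ : ℕ∞) ∧
      (c γ : ℚ) = PowerSeries.coeff l (wt γ) := by
  induction l with
  | zero =>
    classical
    refine ⟨fun γ => if γ = s0 then 1 else 0, fun γ => ?_⟩
    have : autSet al stb s0 0 γ = {w | w = [] ∧ s0 = γ} := by
      ext w
      simp only [autSet, Set.mem_ofPred_eq, List.length_eq_zero_iff]
      constructor
      · rintro ⟨rfl, _, h⟩; exact ⟨rfl, h⟩
      · rintro ⟨rfl, h⟩; exact ⟨rfl, trivial, h⟩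
    rw [this]
    by_cases h : γ = s0
    · subst h
      rw [(h0 _).1 rfl]
      simp
    · rw [(h0 _).2 h]
      simp [h, Ne.symm h]
  | succ l ih =>
    obtain ⟨c, hc⟩ := ih
    choose pr hn hm hs using H
    refine ⟨fun γ => ((pr γ).map fun p => c p.2).sum, fun γ => ⟨?_, ?_⟩⟩
    · rw [← aut_union al stb s0 l c (fun γ => (hc γ).1) (pr γ) (hn γ)]
      congr 1
      ext w
      constructor
      · rintro ⟨h1, h2, h3⟩
        rcases w with _ | ⟨s, w⟩
        · simp at h1
        · refine ⟨(s, autSt stb s0 w), (hm γ _ _).2 ⟨h2.2, h3⟩, w, ⟨by simpa using h1, h2.1, rfl⟩, rfl⟩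
      · rintro ⟨⟨s, β⟩, hp, w', ⟨h1, h2, h3⟩, rfl⟩
        have := (hm γ _ _).1 hp
        simp only at h3
        subst h3
        exact ⟨by simp [h1], ⟨h2, this.1⟩, this.2⟩
    · rw [hs γ l]
      push_cast
      rw [List.map_map]
      congr 1
      apply List.map_congr_left
      intro p _
      exact (hc p.2).2
end automaton

/-! height automaton -/
def alH : Stp → ℕ → Prop
  | .op, _ => True
  | .fx, _ => True
  | .cl k, h => k = 0 ∧ 0 < h
def stH : Stp → ℕ → ℕ
  | .op, h => h + 1
  | .fx, h => h
  | .cl _, h => h - 1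

theorem coeff_step {l : ℕ} {A B : PowerSeries ℚ} (h : A = PowerSeries.X * B) :
    PowerSeries.coeff (l+1) A = PowerSeries.coeff l B := by
  rw [h, PowerSeries.coeff_succ_X_mul]
theorem coeff_step1 {l : ℕ} {A B : PowerSeries ℚ} (h : A = 1 + PowerSeries.X * B) :
    PowerSeries.coeff (l+1) A = PowerSeries.coeff l B := by
  rw [h, map_add, PowerSeries.coeff_succ_X_mul]; simp [PowerSeries.coeff_one]

theorem constM : PowerSeries.constantCoeff serM = 1 := by simp [serM, motz]

theorem countH (l : ℕ) : ∃ c : ℕ → ℕ, ∀ γ, (autSet alH stH 0 l γ).encard = (c γ : ℕ∞) ∧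
      (c γ : ℚ) = PowerSeries.coeff l (serM * serY ^ γ) := by
  apply aut_count
  · intro γ
    constructor
    · rintro rfl; simp [constM]
    · intro h; simp [serY_const, h]
  · intro h
    have h2 := serM_eq
    have h3 := serY_eq
    rcases h with _ | h
    · refine ⟨[(.fx, 0), (.cl 0, 1)], by simp, ?_, ?_⟩
      · rintro (_ | _ | k) β <;> simp [alH, stH]; omega
      · intro l
        rw [coeff_step1 (B := serM + serM * serY)]
        · simp
        · linear_combination h2 + (1+serY) * h3
    · refine ⟨[(.op, h), (.fx, h+1), (.cl 0, h+2)], by simp, ?_, ?_⟩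
      · rintro (_ | _ | k) β <;> simp [alH, stH]; omega
      · intro l
        rw [coeff_step (B := serM * serY ^ h + serM * serY ^ (h+1) + serM * serY ^ (h+2))]
        · simp [add_assoc]
        · linear_combination serM * serY ^ h * h3 + serM * serY ^ h * PowerSeries.X * h2

section mlsec
variable {α β : Type}
/-- modify the last entry of a list -/
def ml (g : α → α) : List α → List α
  | [] => []
  | [a] => [g a]
  | a :: b :: l => a :: ml g (b :: l)

@[simp] theorem ml_nil (g : α → α) : ml g [] = [] := rfl
@[simp] theorem ml_concat (g : α → α) (l : List α) (a : α) : ml g (l ++ [a]) = l ++ [g a] := by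
  induction l with
  | nil => rfl
  | cons b l ih =>
    rcases l with _ | ⟨c, l⟩
    · rfl
    · simp only [List.cons_append] at ih ⊢
      rw [ml, ih]
theorem ml_map (g : α → α) (h : β → β) (f : α → β) (hf : ∀ a, f (g a) = h (f a)) (l : List α) :
    (ml g l).map f = ml h (l.map f) := by
  rcases List.eq_nil_or_concat l with rfl | ⟨l, a, rfl⟩
  · rfl
  · simp [hf]
end mlsec

def bT : Bool → Bool := fun _ => true

def alB : Stp → List Bool → Prop
  | .op, _ => True
  | .fx, β => ∃ k, β = List.replicate k false
  | .cl k, β => ∃ b r, β = List.replicate k false ++ b :: r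

/-- action of a step on any labelled list -/
def gst {α : Type} (g : α → α) (new : α) : Stp → List α → List α
  | .op, β => β ++ [new]
  | .fx, β => ml g β
  | .cl 0, β => β.tail
  | .cl (k+1), β => ml g (β.take (k+1)) ++ ml g (β.drop (k+2))

def stB : Stp → List Bool → List Bool := gst bT false

theorem repl_succ (k : ℕ) : List.replicate (k+1) false = List.replicate k false ++ [false] := by
  rw [List.replicate_succ']

theorem ml_repl (k : ℕ) : ml bT (List.replicate (k+1) false) = List.replicate k false ++ [true] := by
  rw [repl_succ, ml_concat]; rfl

theorem stepB_cl (k : ℕ) (b : Bool) (r : List Bool) :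
    stB (.cl (k+1)) (List.replicate (k+1) false ++ b :: r) = List.replicate k false ++ true :: ml bT r := by
  have h1 : (List.replicate (k+1) false ++ b :: r).take (k+1) = List.replicate (k+1) false := by
    rw [List.take_left']; simp
  have h2 : (List.replicate (k+1) false ++ b :: r).drop (k+2) = r := by
    have : List.replicate (k+1) false ++ b :: r = (List.replicate (k+1) false ++ [b]) ++ r := by simp
    rw [this, List.drop_left']; simp
  simp only [stB, gst]
  rw [h1, h2, ml_repl]; simp

theorem repl_uniq {k K : ℕ} {s t : List Bool}
    (h : List.replicate k false ++ true :: s = List.replicate K false ++ true :: t) : k = K ∧ s = t := by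
  induction k generalizing K with
  | zero =>
    cases K with
    | zero => simpa using h
    | succ K => simp [List.replicate_succ] at h
  | succ k ih =>
    cases K with
    | zero => simp [List.replicate_succ] at h
    | succ K =>
      simp only [List.replicate_succ, List.cons_append, List.cons.injEq, true_and] at h
      have := ih h
      exact ⟨by omega, this.2⟩

theorem predB_op (β γ : List Bool) : (alB .op β ∧ stB .op β = γ) ↔ γ = β ++ [false] := by
  simp [alB, stB, gst, eq_comm]
theorem predB_fx (β γ : List Bool) : (alB .fx β ∧ stB .fx β = γ) ↔
    (β = [] ∧ γ = []) ∨ ∃ k, β = List.replicate (k+1) false ∧ γ = List.replicate k false ++ true :: [] := by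
  constructor
  · rintro ⟨⟨k, rfl⟩, rfl⟩
    rcases k with _ | k
    · left; exact ⟨rfl, rfl⟩
    · right; exact ⟨k, rfl, ml_repl k⟩
  · rintro (⟨rfl, rfl⟩ | ⟨k, rfl, rfl⟩)
    · exact ⟨⟨0, rfl⟩, rfl⟩
    · exact ⟨⟨k+1, rfl⟩, ml_repl k⟩
theorem predB_cl0 (β γ : List Bool) : (alB (.cl 0) β ∧ stB (.cl 0) β = γ) ↔ β = false :: γ ∨ β = true :: γ := by
  constructor
  · rintro ⟨⟨b, r, rfl⟩, rfl⟩
    cases b <;> simp [stB, gst]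
  · rintro (rfl | rfl)
    · exact ⟨⟨_, _, rfl⟩, rfl⟩
    · exact ⟨⟨_, _, rfl⟩, rfl⟩
theorem predB_cl (k : ℕ) (β γ : List Bool) : (alB (.cl (k+1)) β ∧ stB (.cl (k+1)) β = γ) ↔
    ∃ b, (β = List.replicate (k+1) false ++ b :: [] ∧ γ = List.replicate k false ++ true :: []) ∨
      ∃ δ b', β = List.replicate (k+1) false ++ b :: (δ ++ [b']) ∧
        γ = List.replicate k false ++ true :: (δ ++ [true]) := by
  constructor
  · rintro ⟨⟨b, r, rfl⟩, rfl⟩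
    rw [stepB_cl]
    refine ⟨b, ?_⟩
    rcases List.eq_nil_or_concat r with rfl | ⟨l, a, rfl⟩
    · left; exact ⟨rfl, rfl⟩
    · right; exact ⟨l, a, by simp, by simp [bT]⟩
  · rintro ⟨b, ⟨rfl, rfl⟩ | ⟨δ, b', rfl, rfl⟩⟩
    · exact ⟨⟨_, _, rfl⟩, stepB_cl _ _ _⟩
    · exact ⟨⟨_, _, rfl⟩, by rw [stepB_cl]; simp [bT]⟩

theorem bcases (γ : List Bool) : γ = [] ∨ (∃ δ, γ = δ ++ [false]) ∨
    (∃ k, γ = List.replicate k false ++ true :: []) ∨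
    ∃ k δ, γ = List.replicate k false ++ true :: (δ ++ [true]) := by
  rcases List.eq_nil_or_concat γ with rfl | ⟨l, a, rfl⟩
  · simp
  rcases a with _ | _
  · right; left; exact ⟨l, by simp⟩
  right; right
  have : (∃ k, l = List.replicate k false) ∨ ∃ k δ, l = List.replicate k false ++ true :: δ := by
    induction l with
    | nil => left; exact ⟨0, rfl⟩
    | cons b l ih =>
      cases b
      · rcases ih with ⟨k, rfl⟩ | ⟨k, δ, rfl⟩
        · left; exact ⟨k+1, rfl⟩
        · right; exact ⟨k+1, δ, rfl⟩
      · right; exact ⟨0, l, rfl⟩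
  rcases this with ⟨k, rfl⟩ | ⟨k, δ, rfl⟩
  · left; exact ⟨k, by simp⟩
  · right; exact ⟨k, δ, by simp⟩

noncomputable def wtB (γ : List Bool) : PowerSeries ℚ := serM * serY ^ (γ.count true) * serZ ^ γ.length

theorem countB (l : ℕ) : ∃ c : List Bool → ℕ, ∀ γ, (autSet alB stB [] l γ).encard = (c γ : ℕ∞) ∧
      (c γ : ℚ) = PowerSeries.coeff l (wtB γ) := by
  apply aut_count
  · intro γ
    constructor
    · rintro rfl; simp [constM, wtB]
    · intro h; simp [serZ_const, h, wtB]
  · intro γ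
    have hM := serM_eq
    have hY := serY_eq
    have hZ := serZ_eq
    have hZ2 := serZ_eq2
    rcases bcases γ with rfl | ⟨δ, rfl⟩ | ⟨k, rfl⟩ | ⟨k, δ, rfl⟩
    · refine ⟨[(.fx, []), (.cl 0, [false]), (.cl 0, [true])], by simp, ?_, ?_⟩
      · rintro (_ | _ | _ | k) β
        · rw [predB_op]; simp
        · rw [predB_fx]; simp
        · rw [predB_cl0]; simp
        · rw [predB_cl]; simp
      · intro l
        simp only [List.map_cons, List.map_nil, List.sum_cons, List.sum_nil, ← map_add, add_zero]
        refine coeff_step1 ?_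
        simp [wtB, List.count_replicate]
        linear_combination hM + (1+serY) * hY - PowerSeries.X * serM * hZ
    · refine ⟨[(.op, δ), (.cl 0, false :: (δ ++ [false])), (.cl 0, true :: (δ ++ [false]))], by simp, ?_, ?_⟩
      · rintro (_ | _ | _ | k) β
        · rw [predB_op]; simp [eq_comm]
        · rw [predB_fx]; simp
        · rw [predB_cl0]; simp
        · rw [predB_cl]; simp
          constructor
          · intro y _ h
            have := congrArg List.getLast? h
            simp [List.getLast?_append, List.getLast?_cons] at this
          · intro y _ h
            have := congrArg List.getLast? h
            simp [List.getLast?_append, List.getLast?_cons] at this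
      · intro l
        simp only [List.map_cons, List.map_nil, List.sum_cons, List.sum_nil, ← map_add, add_zero]
        refine coeff_step ?_
        simp [wtB, List.count_replicate]
        linear_combination serM * serY ^ (List.count true δ) * serZ ^ δ.length * (hZ2 - PowerSeries.X * serZ * hZ)
    · refine ⟨[(.fx, List.replicate (k+1) false), (.cl 0, false :: (List.replicate k false ++ true :: [])),
        (.cl 0, true :: (List.replicate k false ++ true :: [])),
        (.cl (k+1), List.replicate (k+1) false ++ false :: []),
        (.cl (k+1), List.replicate (k+1) false ++ true :: [])], by simp, ?_, ?_⟩
      · rintro (_ | _ | _ | j) β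
        · rw [predB_op]; simp
        · rw [predB_fx]; simp
        · rw [predB_cl0]; simp
        · rw [predB_cl]
          constructor
          · intro h
            simp at h
            rcases h with ⟨rfl, rfl⟩ | ⟨rfl, rfl⟩
            · exact ⟨false, Or.inl ⟨rfl, rfl⟩⟩
            · exact ⟨true, Or.inl ⟨rfl, rfl⟩⟩
          · rintro ⟨b, ⟨rfl, h⟩ | ⟨δ, b', rfl, h⟩⟩
            · obtain ⟨rfl, _⟩ := repl_uniq h
              cases b <;> simp
            · have := (repl_uniq h).2
              simp at this
      · intro l
        simp only [List.map_cons, List.map_nil, List.sum_cons, List.sum_nil, ← map_add, add_zero]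
        refine coeff_step ?_
        simp [wtB, List.count_replicate]
        linear_combination serM * serZ ^ (k+1) * (hY + PowerSeries.X * hM - PowerSeries.X * (1 + serY) * hZ)
    · refine ⟨[(.cl 0, false :: (List.replicate k false ++ true :: (δ ++ [true]))),
        (.cl 0, true :: (List.replicate k false ++ true :: (δ ++ [true]))),
        (.cl (k+1), List.replicate (k+1) false ++ false :: (δ ++ [false])),
        (.cl (k+1), List.replicate (k+1) false ++ false :: (δ ++ [true])),
        (.cl (k+1), List.replicate (k+1) false ++ true :: (δ ++ [false])),
        (.cl (k+1), List.replicate (k+1) false ++ true :: (δ ++ [true]))], by simp, ?_, ?_⟩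
      · rintro (_ | _ | _ | j) β
        · rw [predB_op]; simp
          intro h
          have := congrArg List.getLast? h
          simp [List.getLast?_append, List.getLast?_cons] at this
        · rw [predB_fx]; simp
          rintro k' rfl h
          have := (repl_uniq h).2
          simp at this
        · rw [predB_cl0]; simp
        · rw [predB_cl]
          constructor
          · intro h
            simp at h
            rcases h with ⟨rfl, rfl⟩ | ⟨rfl, rfl⟩ | ⟨rfl, rfl⟩ | ⟨rfl, rfl⟩
            · exact ⟨false, Or.inr ⟨_, false, rfl, rfl⟩⟩
            · exact ⟨false, Or.inr ⟨_, true, rfl, rfl⟩⟩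
            · exact ⟨true, Or.inr ⟨_, false, rfl, rfl⟩⟩
            · exact ⟨true, Or.inr ⟨_, true, rfl, rfl⟩⟩
          · rintro ⟨b, ⟨rfl, h⟩ | ⟨δ, b', rfl, h⟩⟩
            · have := (repl_uniq h).2
              simp at this
            · obtain ⟨rfl, h2⟩ := repl_uniq h
              simp at h2
              subst h2
              cases b <;> cases b' <;> simp
      · intro l
        simp only [List.map_cons, List.map_nil, List.sum_cons, List.sum_nil, ← map_add, add_zero]
        refine coeff_step ?_
        simp [wtB, List.count_replicate]
        linear_combination serM * serY ^ (List.count true δ) * serZ ^ (k + 1 + δ.length + 1) *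
          (serY * hY + serY * PowerSeries.X * hM - PowerSeries.X * (1 + serY + serY ^ 2) * hZ)

def opl : List Stp → List ℕ
  | [] => []
  | .op :: w => opl w ++ [w.length]
  | .fx :: w => opl w
  | .cl k :: w => (opl w).eraseIdx k

def fn : List Stp → ℕ → ℕ
  | [] => id
  | .op :: w => fn w
  | .fx :: w => fn w
  | .cl k :: w => Function.update (Function.update (fn w) ((opl w).getD k 0) w.length)
      w.length ((opl w).getD k 0)

def Valid : List Stp → Prop
  | [] => True
  | .op :: w => Valid w
  | .fx :: w => Valid w
  | .cl k :: w => Valid w ∧ k < (opl w).length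

theorem opl_sorted (w : List Stp) : (opl w).Pairwise (· < ·) ∧ ∀ x ∈ opl w, x < w.length := by
  induction w with
  | nil => simp [opl]
  | cons s w ih =>
    rcases s with _ | _ | k
    · simp only [opl]
      refine ⟨?_, ?_⟩
      · rw [List.pairwise_append]
        exact ⟨ih.1, by simp, by simpa using ih.2⟩
      · intro x hx
        simp at hx ⊢
        rcases hx with h | h
        · have := ih.2 x h; omega
        · omega
    · exact ⟨ih.1, fun x hx => by have := ih.2 x hx; simp; omega⟩
    · simp only [opl]
      refine ⟨ih.1.sublist (List.eraseIdx_sublist ..), fun x hx => ?_⟩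
      have := ih.2 x ((List.eraseIdx_sublist ..).subset hx)
      simp; omega

theorem opl_lt {w : List Stp} {x : ℕ} (h : x ∈ opl w) : x < w.length := (opl_sorted w).2 x h

theorem opl_nodup (w : List Stp) : (opl w).Nodup := (opl_sorted w).1.imp (fun h => Nat.ne_of_lt h)

theorem cl_mem {w : List Stp} {k : ℕ} (hk : k < (opl w).length) : (opl w).getD k 0 ∈ opl w := by
  rw [List.getD_eq_getElem _ _ hk]; exact List.getElem_mem hk

theorem mem_cl {w : List Stp} {k : ℕ} (hk : k < (opl w).length) (x : ℕ) :
    x ∈ opl (.cl k :: w) ↔ x ∈ opl w ∧ x ≠ (opl w).getD k 0 := by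
  rw [List.getD_eq_getElem _ _ hk]
  simp only [opl]
  rw [← (opl_nodup w).erase_getElem k hk, (opl_nodup w).mem_erase_iff]
  tauto

theorem fn_facts (w : List Stp) (hw : Valid w) : (∀ x ∈ opl w, fn w x = x) ∧
    (∀ x, w.length ≤ x → fn w x = x) ∧ (∀ x, fn w (fn w x) = x) := by
  induction w with
  | nil => simp [opl, fn]
  | cons s w ih =>
    rcases s with _ | _ | k
    · obtain ⟨h1, h2, h3⟩ := ih hw
      refine ⟨?_, ?_, h3⟩
      · intro x hx
        simp [opl] at hx
        rcases hx with h | rfl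
        · exact h1 x h
        · exact h2 _ le_rfl
      · intro x hx; apply h2; simp at hx; omega
    · obtain ⟨h1, h2, h3⟩ := ih hw
      refine ⟨h1, ?_, h3⟩
      intro x hx; apply h2; simp at hx; omega
    · obtain ⟨h1, h2, h3⟩ := ih hw.1
      have ho := cl_mem hw.2
      have hm := mem_cl hw.2
      simp only [fn]
      set o := (opl w).getD k 0
      have hol := opl_lt ho
      have hfo := h1 o ho
      have hfl := h2 w.length le_rfl
      refine ⟨?_, ?_, ?_⟩
      · intro x hx
        obtain ⟨hx1, hx2⟩ := (hm x).1 hx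
        have := opl_lt hx1
        rw [Function.update_of_ne (by omega), Function.update_of_ne hx2, h1 x hx1]
      · intro x hx
        simp at hx
        rw [Function.update_of_ne (by omega), Function.update_of_ne (by omega), h2 x (by omega)]
      · intro x
        by_cases hx : x = w.length
        · subst hx
          rw [Function.update_self, Function.update_of_ne (by omega), Function.update_self]
        · rw [Function.update_of_ne hx]
          by_cases hxo : x = o
          · rw [hxo, Function.update_self, Function.update_self]
          · rw [Function.update_of_ne hxo]
            have e1 : fn w x ≠ w.length := by
              intro h; rw [← h, h3] at hfl; rw [h] at hfl; omega
            have e2 : fn w x ≠ o := by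
              intro h; rw [← h, h3] at hfo; omega
            rw [Function.update_of_ne e1, Function.update_of_ne e2, h3]

theorem fn_lt {w : List Stp} (hw : Valid w) {x : ℕ} (hx : x < w.length) : fn w x < w.length := by
  obtain ⟨h1, h2, h3⟩ := fn_facts w hw
  by_contra h
  have := h2 _ (not_lt.1 h)
  rw [h3] at this
  omega

theorem word_inj (w : List Stp) : ∀ w', Valid w → Valid w' → w.length = w'.length → fn w = fn w' →
    (∀ x, x ∈ opl w ↔ x ∈ opl w') → w = w' := by
  induction w with
  | nil => intro w' _ _ h _ _; simp at h; exact (List.length_eq_zero_iff.1 h.symm).symm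
  | cons s w ih =>
    intro w' hw hw' hl hf ho
    rcases w' with _ | ⟨s', w'⟩
    · simp at hl
    have hl' : w.length = w'.length := by simpa using hl
    have fl := congrFun hf w.length
    have ol := ho w.length
    have nl : w.length ∉ opl w := fun h => lt_irrefl _ (opl_lt h)
    have nl' : w.length ∉ opl w' := fun h => by have := (opl_lt h); omega
    have L : Valid w → Valid w' → fn w = fn w' → (∀ x, x ∈ opl w ↔ x ∈ opl w') → w = w' :=
      fun a b c d => ih w' a b hl' c d
    have ne : ∀ (w1 : List Stp) k, k < (opl w1).length → (opl w1).getD k 0 ≠ w1.length :=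
      fun w1 k hk => (opl_lt (cl_mem hk)).ne
    have mcl : ∀ (w1 : List Stp) k, w1.length ∉ opl (.cl k :: w1) := by
      intro w1 k h
      have := (opl_lt ((List.eraseIdx_sublist ..).subset h)); omega
    rcases s with _ | _ | k <;> rcases s' with _ | _ | k'
    · rw [L hw hw' hf]
      intro x
      have := ho x
      simp [opl, hl'] at this
      by_cases hx : x = w'.length
      · subst hx; rw [← hl']; tauto
      · tauto
    · simp [opl, nl'] at ol
    · exfalso
      have h2 := mcl w' k'
      rw [← hl', ← ol] at h2; simp [opl] at h2
    · simp [opl, hl'] at ol; exact (nl (hl' ▸ ol)).elim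
    · rw [L hw hw' hf ho]
    · exfalso
      simp only [fn, hl', Function.update_self] at fl
      rw [← hl', (fn_facts w hw).2.1 _ le_rfl] at fl
      exact ne w' k' hw'.2 (by omega)
    · exfalso
      have h2 := mcl w k
      rw [ol, hl'] at h2; simp [opl] at h2
    · exfalso
      simp only [fn, Function.update_self] at fl
      rw [hl', (fn_facts w' hw').2.1 _ le_rfl] at fl
      exact ne w k hw.2 (by omega)
    · have fo : (opl w).getD k 0 = (opl w').getD k' 0 := by
        simpa [fn, hl', Function.update_self] using fl
      have hfw : fn w = fn w' := by
        funext x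
        by_cases hx : x = w.length
        · rw [(fn_facts w hw.1).2.1 x (by omega), (fn_facts w' hw'.1).2.1 x (by omega)]
        by_cases hx' : x = (opl w).getD k 0
        · rw [(fn_facts w hw.1).1 x (hx' ▸ cl_mem hw.2),
            (fn_facts w' hw'.1).1 x (by rw [hx', fo]; exact cl_mem hw'.2)]
        have := congrFun hf x
        simp only [fn, ← hl', ← fo] at this
        rwa [Function.update_of_ne hx, Function.update_of_ne hx', Function.update_of_ne hx,
          Function.update_of_ne hx'] at this
      have hm : ∀ x, x ∈ opl w ↔ x ∈ opl w' := by
        intro x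
        have h := ho x
        rw [mem_cl hw.2, mem_cl hw'.2, fo] at h
        by_cases hx' : x = (opl w').getD k' 0
        · constructor
          · intro _; rw [hx']; exact cl_mem hw'.2
          · intro _; rw [hx', ← fo]; exact cl_mem hw.2
        · tauto
      have hww := L hw.1 hw'.1 hfw hm
      subst hww
      have : k = k' := by
        have h1 := hw.2
        have h2 := hw'.2
        rw [List.getD_eq_getElem _ _ h1, List.getD_eq_getElem _ _ h2] at fo
        exact ((opl_nodup w).getElem_inj_iff).1 fo
      rw [this]

theorem word_surj (l : ℕ) : ∀ (f : ℕ → ℕ) (O : Finset ℕ), (∀ x, f (f x) = x) → (∀ x, l ≤ x → f x = x) →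
    (∀ x ∈ O, x < l ∧ f x = x) → ∃ w, Valid w ∧ w.length = l ∧ fn w = f ∧ ∀ x, x ∈ opl w ↔ x ∈ O := by
  induction l with
  | zero =>
    intro f O h1 h2 h3
    refine ⟨[], trivial, rfl, ?_, ?_⟩
    · funext x; rw [h2 x (Nat.zero_le _)]; rfl
    · intro x; simp [opl]; intro h; have := (h3 x h).1; omega
  | succ l ih =>
    intro f O h1 h2 h3
    by_cases hO : l ∈ O
    · obtain ⟨w, a, b, c, d⟩ := ih f (O.erase l) h1
        (fun x hx => by
          by_cases h : x = l
          · rw [h]; exact (h3 l hO).2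
          · exact h2 x (by omega))
        (fun x hx => by
          rw [Finset.mem_erase] at hx
          have := h3 x hx.2
          exact ⟨by omega, this.2⟩)
      refine ⟨.op :: w, a, by simp [b], c, fun x => ?_⟩
      simp only [opl, List.mem_append, d, List.mem_singleton, b, Finset.mem_erase]
      by_cases h : x = l
      · simp [h, hO]
      · simp [h]
    by_cases hf : f l = l
    · obtain ⟨w, a, b, c, d⟩ := ih f O h1
        (fun x hx => by
          by_cases h : x = l
          · rw [h]; exact hf
          · exact h2 x (by omega))
        (fun x hx => by
          have := h3 x hx
          have : x ≠ l := by rintro rfl; exact hO hx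
          exact ⟨by omega, (h3 x hx).2⟩)
      exact ⟨.fx :: w, a, by simp [b], c, d⟩
    · have hol : f l < l := by
        by_contra h
        have := h2 (f l) (by omega)
        rw [h1] at this; omega
      have hoO : f l ∉ O := by
        intro h
        have := (h3 _ h).2
        rw [h1] at this; omega
      obtain ⟨w, a, b, c, d⟩ := ih (fun x => if x = l ∨ x = f l then x else f x) (insert (f l) O)
        (fun x => by
          by_cases h : x = l ∨ x = f l
          · simp only [h, if_true]
          · have e : ¬ (f x = l ∨ f x = f l) := by
              rintro (e | e)
              · apply h; right; rw [← e, h1]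
              · apply h; left; have := congrArg f e; rwa [h1, h1] at this
            simp only [h, e, if_false]; exact h1 x)
        (fun x hx => by
          by_cases h : x = l ∨ x = f l
          · simp only [h, if_true]
          · simp only [h, if_false]; exact h2 x (by push Not at h; omega))
        (fun x hx => by
          rw [Finset.mem_insert] at hx
          rcases hx with rfl | hx
          · exact ⟨hol, by simp⟩
          · have := h3 x hx
            have : x ≠ l := by rintro rfl; exact hO hx
            refine ⟨by omega, ?_⟩
            by_cases h : x = l ∨ x = f l
            · simp only [h, if_true]
            · simp only [h, if_false]; exact (h3 x hx).2)
      have hmem : f l ∈ opl w := (d _).2 (by simp)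
      obtain ⟨k, hk, hke⟩ := List.getElem_of_mem hmem
      have hkd : (opl w).getD k 0 = f l := by rw [List.getD_eq_getElem _ _ hk, hke]
      refine ⟨.cl k :: w, ⟨a, hk⟩, by simp [b], ?_, fun x => ?_⟩
      · funext x
        simp only [fn, hkd, b, c]
        by_cases hx : x = l
        · subst hx; simp
        · rw [Function.update_of_ne hx]
          by_cases hx' : x = f l
          · rw [hx', Function.update_self, h1]
          · rw [Function.update_of_ne hx']; simp [hx, hx']
      · rw [mem_cl hk, hkd, d]
        simp only [Finset.mem_insert]
        by_cases hx' : x = f l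
        · subst hx'; simp [hoO]
        · simp [hx']

section abstractsem
variable (A : ℕ → ℕ → Prop) (O : ℕ → Prop)

def Reach (a y : ℕ) : Prop := O a ∨ ∃ b, A a b ∧ y < b

def Lam : Prop := ∃ o x y u z, o < x ∧ x < u ∧ y < z ∧ A x y ∧ A u z ∧ Reach A O o z

def Gam : Prop := ∃ a x c y u z, a < x ∧ x < c ∧ c < y ∧ y < u ∧ A x y ∧ Reach A O a y ∧ A u z ∧ Reach A O c z

def Good : Prop := ¬ Lam A O ∧ ¬ Gam A O

def Sepd (o o' : ℕ) : Prop := ∃ x y, A x y ∧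
  (o < x ∧ x < o' ∨ (x < o ∧ o < y ∧ y < o' ∧ ∃ a, a < x ∧ Reach A O a y))

def Nst : Prop := ∃ a x y, a < x ∧ x < y ∧ A x y ∧ Reach A O a y

/-- adding an arc from `o` to the new point `l` -/
structure AddArc (l o : ℕ) (A : ℕ → ℕ → Prop) (O : ℕ → Prop) (A' : ℕ → ℕ → Prop) (O' : ℕ → Prop) : Prop where
  hA : ∀ x y, A x y → x ≤ y ∧ y < l
  hO : ∀ x, O x → x < l
  ho : o = l ∨ O o
  hA' : ∀ x y, A' x y ↔ A x y ∨ (x = o ∧ y = l)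
  hO' : ∀ x, O' x ↔ O x ∧ x ≠ o

structure AddOp (l : ℕ) (A : ℕ → ℕ → Prop) (O : ℕ → Prop) (A' : ℕ → ℕ → Prop) (O' : ℕ → Prop) : Prop where
  hA : ∀ x y, A x y → x ≤ y ∧ y < l
  hO : ∀ x, O x → x < l
  hA' : ∀ x y, A' x y ↔ A x y
  hO' : ∀ x, O' x ↔ O x ∨ x = l

variable {A O}
variable {A' : ℕ → ℕ → Prop} {O' : ℕ → Prop} {l o : ℕ}

theorem AddArc.le (h : AddArc l o A O A' O') : o ≤ l := by
  rcases h.ho with rfl | h1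
  · exact le_rfl
  · exact (h.hO _ h1).le

theorem AddArc.reach (h : AddArc l o A O A' O') {a y : ℕ} (ha : a < l) (hy : y < l) :
    Reach A' O' a y ↔ Reach A O a y := by
  constructor
  · rintro (h1 | ⟨b, hb, hyb⟩)
    · exact Or.inl ((h.hO' a).1 h1).1
    · rcases (h.hA' _ _).1 hb with hb | ⟨rfl, rfl⟩
      · exact Or.inr ⟨b, hb, hyb⟩
      · rcases h.ho with h2 | h2
        · omega
        · exact Or.inl h2
  · rintro (h1 | ⟨b, hb, hyb⟩)
    · by_cases hao : a = o
      · exact Or.inr ⟨l, (h.hA' _ _).2 (Or.inr ⟨hao, rfl⟩), hy⟩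
      · exact Or.inl ((h.hO' a).2 ⟨h1, hao⟩)
    · exact Or.inr ⟨b, (h.hA' _ _).2 (Or.inl hb), hyb⟩

theorem AddArc.reachl (h : AddArc l o A O A' O') {a : ℕ} :
    Reach A' O' a l ↔ O a ∧ a ≠ o := by
  constructor
  · rintro (h1 | ⟨b, hb, hyb⟩)
    · exact (h.hO' a).1 h1
    · rcases (h.hA' _ _).1 hb with hb | ⟨rfl, rfl⟩
      · have := h.hA _ _ hb; omega
      · omega
  · intro h1
    exact Or.inl ((h.hO' a).2 h1)

theorem AddArc.good (h : AddArc l o A O A' O') :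
    Good A' O' ↔ Good A O ∧ ∀ o1, O o1 → o1 < o → ¬ Sepd A O o1 o := by
  have hol := h.le
  constructor
  · rintro ⟨h1, h2⟩
    refine ⟨⟨?_, ?_⟩, ?_⟩
    · rintro ⟨a, x, y, u, z, e1, e2, e3, a1, a2, r⟩
      have := h.hA _ _ a1
      have := h.hA _ _ a2
      exact h1 ⟨a, x, y, u, z, e1, e2, e3, (h.hA' _ _).2 (Or.inl a1), (h.hA' _ _).2 (Or.inl a2),
        (h.reach (by omega) (by omega)).2 r⟩
    · rintro ⟨a, x, c, y, u, z, e1, e2, e3, e4, a1, r1, a2, r2⟩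
      have := h.hA _ _ a1
      have := h.hA _ _ a2
      exact h2 ⟨a, x, c, y, u, z, e1, e2, e3, e4, (h.hA' _ _).2 (Or.inl a1),
        (h.reach (by omega) (by omega)).2 r1, (h.hA' _ _).2 (Or.inl a2),
        (h.reach (by omega) (by omega)).2 r2⟩
    · rintro o1 ho1 hlt ⟨x, y, a1, ⟨e1, e2⟩ | ⟨e1, e2, e3, a, e4, r⟩⟩
      · have := h.hA _ _ a1
        exact h1 ⟨o1, x, y, o, l, e1, e2, this.2, (h.hA' _ _).2 (Or.inl a1),
          (h.hA' _ _).2 (Or.inr ⟨rfl, rfl⟩), h.reachl.2 ⟨ho1, by omega⟩⟩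
      · have := h.hA _ _ a1
        exact h2 ⟨a, x, o1, y, o, l, e4, e1, e2, e3, (h.hA' _ _).2 (Or.inl a1),
          (h.reach (by omega) (by omega)).2 r,
          (h.hA' _ _).2 (Or.inr ⟨rfl, rfl⟩), h.reachl.2 ⟨ho1, by omega⟩⟩
  · rintro ⟨⟨h1, h2⟩, h3⟩
    refine ⟨?_, ?_⟩
    · rintro ⟨a, x, y, u, z, e1, e2, e3, a1, a2, r⟩
      rcases (h.hA' _ _).1 a2 with a2 | ⟨rfl, rfl⟩
      · have := h.hA _ _ a2
        rcases (h.hA' _ _).1 a1 with a1 | ⟨rfl, rfl⟩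
        · exact h1 ⟨a, x, y, u, z, e1, e2, e3, a1, a2, (h.reach (by omega) (by omega)).1 r⟩
        · omega
      · rcases (h.hA' _ _).1 a1 with a1 | ⟨rfl, rfl⟩
        · exact h3 a (h.reachl.1 r).1 (by omega) ⟨x, y, a1, Or.inl ⟨e1, e2⟩⟩
        · omega
    · rintro ⟨a, x, c, y, u, z, e1, e2, e3, e4, a1, r1, a2, r2⟩
      rcases (h.hA' _ _).1 a2 with a2 | ⟨rfl, rfl⟩
      · have := h.hA _ _ a2
        rcases (h.hA' _ _).1 a1 with a1 | ⟨rfl, rfl⟩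
        · exact h2 ⟨a, x, c, y, u, z, e1, e2, e3, e4, a1, (h.reach (by omega) (by omega)).1 r1, a2,
            (h.reach (by omega) (by omega)).1 r2⟩
        · omega
      · rcases (h.hA' _ _).1 a1 with a1 | ⟨rfl, rfl⟩
        · exact h3 c (h.reachl.1 r2).1 (by omega) ⟨x, y, a1,
            Or.inr ⟨e2, e3, e4, a, e1, (h.reach (by omega) (by omega)).1 r1⟩⟩
        · omega

theorem AddArc.nst (h : AddArc l o A O A' O') :
    ¬ Nst A' O' ↔ ¬ Nst A O ∧ (o = l ∨ ∀ o1, O o1 → ¬ o1 < o) := by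
  have hol := h.le
  constructor
  · intro h1
    refine ⟨?_, ?_⟩
    · rintro ⟨a, x, y, e1, e2, a1, r⟩
      have := h.hA _ _ a1
      exact h1 ⟨a, x, y, e1, e2, (h.hA' _ _).2 (Or.inl a1), (h.reach (by omega) (by omega)).2 r⟩
    · by_cases hl : o = l
      · exact Or.inl hl
      · right
        intro o1 ho1 hlt
        exact h1 ⟨o1, o, l, hlt, by omega, (h.hA' _ _).2 (Or.inr ⟨rfl, rfl⟩), h.reachl.2 ⟨ho1, by omega⟩⟩
  · rintro ⟨h1, h2⟩ ⟨a, x, y, e1, e2, a1, r⟩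
    rcases (h.hA' _ _).1 a1 with a1 | ⟨rfl, rfl⟩
    · have := h.hA _ _ a1
      exact h1 ⟨a, x, y, e1, e2, a1, (h.reach (by omega) (by omega)).1 r⟩
    · rcases h2 with h2 | h2
      · omega
      · exact h2 a (h.reachl.1 r).1 e1

theorem AddOp.reach (h : AddOp l A O A' O') {a y : ℕ} (ha : a < l) :
    Reach A' O' a y ↔ Reach A O a y := by
  have : a ≠ l := by omega
  simp only [Reach, h.hA', h.hO', this, or_false]

theorem AddOp.good (h : AddOp l A O A' O') : Good A' O' ↔ Good A O := by
  have e1 : Lam A' O' ↔ Lam A O := by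
    constructor
    · rintro ⟨a, x, y, u, z, e1, e2, e3, a1, a2, r⟩
      rw [h.hA'] at a1 a2
      have := h.hA _ _ a1
      exact ⟨a, x, y, u, z, e1, e2, e3, a1, a2, (h.reach (by omega)).1 r⟩
    · rintro ⟨a, x, y, u, z, e1, e2, e3, a1, a2, r⟩
      have := h.hA _ _ a1
      rw [← h.hA'] at a1 a2
      exact ⟨a, x, y, u, z, e1, e2, e3, a1, a2, (h.reach (by omega)).2 r⟩
  have e2 : Gam A' O' ↔ Gam A O := by
    constructor
    · rintro ⟨a, x, c, y, u, z, e1, e2, e3, e4, a1, r1, a2, r2⟩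
      rw [h.hA'] at a1 a2
      have := h.hA _ _ a1
      exact ⟨a, x, c, y, u, z, e1, e2, e3, e4, a1, (h.reach (by omega)).1 r1, a2, (h.reach (by omega)).1 r2⟩
    · rintro ⟨a, x, c, y, u, z, e1, e2, e3, e4, a1, r1, a2, r2⟩
      have := h.hA _ _ a1
      rw [← h.hA'] at a1 a2
      exact ⟨a, x, c, y, u, z, e1, e2, e3, e4, a1, (h.reach (by omega)).2 r1, a2, (h.reach (by omega)).2 r2⟩
  simp only [Good, e1, e2]

theorem AddOp.nst (h : AddOp l A O A' O') : Nst A' O' ↔ Nst A O := by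
  constructor
  · rintro ⟨a, x, y, e1, e2, a1, r⟩
    rw [h.hA'] at a1
    have := h.hA _ _ a1
    exact ⟨a, x, y, e1, e2, a1, (h.reach (by omega)).1 r⟩
  · rintro ⟨a, x, y, e1, e2, a1, r⟩
    have := h.hA _ _ a1
    rw [← h.hA'] at a1
    exact ⟨a, x, y, e1, e2, a1, (h.reach (by omega)).2 r⟩

/-- bars separate exactly the separated pairs of open points -/
def BInv (l : ℕ) (A : ℕ → ℕ → Prop) (O B : ℕ → Prop) : Prop :=
  ∀ o o', O o → (O o' ∨ o' = l) → o < o' → (Sepd A O o o' ↔ ∃ q, B q ∧ o ≤ q ∧ q < o')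

theorem AddOp.inv {B B' : ℕ → Prop} (h : AddOp l A O A' O') (hB : ∀ q, B q → O q)
    (hB' : ∀ q, B' q ↔ B q) (hi : BInv l A O B) : BInv (l+1) A' O' B' := by
  have hs : ∀ a b, Sepd A' O' a b ↔ Sepd A O a b := by
    intro a b
    constructor
    · rintro ⟨x, y, a1, e | ⟨e1, e2, e3, a, e4, r⟩⟩
      · exact ⟨x, y, (h.hA' _ _).1 a1, Or.inl e⟩
      · rw [h.hA'] at a1
        have := h.hA _ _ a1
        exact ⟨x, y, a1, Or.inr ⟨e1, e2, e3, a, e4, (h.reach (by omega)).1 r⟩⟩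
    · rintro ⟨x, y, a1, e | ⟨e1, e2, e3, a, e4, r⟩⟩
      · exact ⟨x, y, (h.hA' _ _).2 a1, Or.inl e⟩
      · have := h.hA _ _ a1
        exact ⟨x, y, (h.hA' _ _).2 a1, Or.inr ⟨e1, e2, e3, a, e4, (h.reach (by omega)).2 r⟩⟩
  have hsl : ∀ a, Sepd A O a (l+1) ↔ Sepd A O a l := by
    intro a
    constructor
    · rintro ⟨x, y, a1, e | ⟨e1, e2, e3, r⟩⟩
      · have := h.hA _ _ a1
        exact ⟨x, y, a1, Or.inl (by omega)⟩
      · have := h.hA _ _ a1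
        exact ⟨x, y, a1, Or.inr ⟨e1, e2, by omega, r⟩⟩
    · rintro ⟨x, y, a1, e | ⟨e1, e2, e3, r⟩⟩
      · exact ⟨x, y, a1, Or.inl (by omega)⟩
      · exact ⟨x, y, a1, Or.inr ⟨e1, e2, by omega, r⟩⟩
  intro a b ha hb hab
  rw [hs]
  simp only [hB']
  rcases (h.hO' a).1 ha with ha | rfl
  · have hal := h.hO _ ha
    rcases hb with hb | rfl
    · exact hi a b ha ((h.hO' b).1 hb) hab
    · rw [hsl, hi a l ha (Or.inr rfl) hal]
      constructor
      · rintro ⟨q, h1, h2, h3⟩; exact ⟨q, h1, h2, by omega⟩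
      · rintro ⟨q, h1, h2, h3⟩; exact ⟨q, h1, h2, h.hO _ (hB _ h1)⟩
  · constructor
    · rintro ⟨x, y, a1, e⟩
      have := h.hA _ _ a1
      omega
    · rintro ⟨q, h1, h2, h3⟩
      have := h.hO _ (hB _ h1)
      omega

theorem AddArc.inv {B B' : ℕ → Prop} (h : AddArc l o A O A' O') (hB : ∀ q, B q → O q)
    (hno : ∀ q, B q → ¬ q < o)
    (hB' : ∀ q, B' q ↔ (B q ∧ o < q) ∨ ((∃ a, O a ∧ a < o) ∧
      ((O q ∧ q < o ∧ ∀ q1, O q1 → q1 < o → q1 ≤ q) ∨ (O q ∧ o < q ∧ ∀ q1, O q1 → q1 ≤ q))))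
    (hmax : ∀ b, (∃ a, O a ∧ a < b) → ∃ q, O q ∧ q < b ∧ ∀ q1, O q1 → q1 < b → q1 ≤ q)
    (hi : BInv l A O B) : BInv (l+1) A' O' B' := by
  have hol := h.le
  have hs : ∀ a b, b ≤ l + 1 → (Sepd A' O' a b ↔ Sepd A O a b ∨ (a < o ∧ o < b) ∨
      (o < a ∧ a < l ∧ l < b ∧ ∃ a', O a' ∧ a' < o)) := by
    intro a b hb
    constructor
    · rintro ⟨x, y, a1, e | ⟨e1, e2, e3, a', e4, r⟩⟩
      · rcases (h.hA' _ _).1 a1 with a1 | ⟨rfl, rfl⟩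
        · exact Or.inl ⟨x, y, a1, Or.inl e⟩
        · exact Or.inr (Or.inl e)
      · rcases (h.hA' _ _).1 a1 with a1 | ⟨rfl, rfl⟩
        · have := h.hA _ _ a1
          exact Or.inl ⟨x, y, a1, Or.inr ⟨e1, e2, e3, a', e4, (h.reach (by omega) (by omega)).1 r⟩⟩
        · exact Or.inr (Or.inr ⟨e1, e2, e3, a', (h.reachl.1 r).1, e4⟩)
    · rintro (⟨x, y, a1, e | ⟨e1, e2, e3, a', e4, r⟩⟩ | e | ⟨e1, e2, e3, a', e4, e5⟩)
      · exact ⟨x, y, (h.hA' _ _).2 (Or.inl a1), Or.inl e⟩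
      · have := h.hA _ _ a1
        exact ⟨x, y, (h.hA' _ _).2 (Or.inl a1), Or.inr ⟨e1, e2, e3, a', e4, (h.reach (by omega) (by omega)).2 r⟩⟩
      · exact ⟨o, l, (h.hA' _ _).2 (Or.inr ⟨rfl, rfl⟩), Or.inl e⟩
      · exact ⟨o, l, (h.hA' _ _).2 (Or.inr ⟨rfl, rfl⟩), Or.inr ⟨e1, e2, e3, a', e5, h.reachl.2 ⟨e4, by omega⟩⟩⟩
  have hsl : ∀ a, Sepd A O a (l+1) ↔ Sepd A O a l := by
    intro a
    constructor
    · rintro ⟨x, y, a1, e | ⟨e1, e2, e3, r⟩⟩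
      · have := h.hA _ _ a1
        exact ⟨x, y, a1, Or.inl (by omega)⟩
      · have := h.hA _ _ a1
        exact ⟨x, y, a1, Or.inr ⟨e1, e2, by omega, r⟩⟩
    · rintro ⟨x, y, a1, e | ⟨e1, e2, e3, r⟩⟩
      · exact ⟨x, y, a1, Or.inl (by omega)⟩
      · exact ⟨x, y, a1, Or.inr ⟨e1, e2, by omega, r⟩⟩
  intro a b ha hb hab
  obtain ⟨ha, hao⟩ := (h.hO' a).1 ha
  have hal := h.hO _ ha
  have hbl : b ≤ l + 1 := by
    rcases hb with hb | rfl
    · have := h.hO _ ((h.hO' b).1 hb).1; omega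
    · exact le_rfl
  rw [hs a b hbl]
  by_cases hao' : a < o
  · by_cases hob : o < b
    ·
      constructor
      · intro _
        obtain ⟨q, q1, q2, q3⟩ := hmax o ⟨a, ha, hao'⟩
        exact ⟨q, (hB' q).2 (Or.inr ⟨⟨a, ha, hao'⟩, Or.inl ⟨q1, q2, q3⟩⟩), q3 a ha hao', by omega⟩
      · intro _; right; left; exact ⟨hao', hob⟩
    ·
      have hbO : O b ∧ b ≠ o := by
        rcases hb with hb | rfl
        · exact (h.hO' b).1 hb
        · omega
      rw [hi a b ha (Or.inl hbO.1) hab]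
      constructor
      · rintro (⟨q, h1, h2, h3⟩ | e | e)
        · exact (hno q h1 (by omega)).elim
        · omega
        · omega
      · rintro ⟨q, h1, h2, h3⟩
        exfalso
        rcases (hB' q).1 h1 with e | ⟨_, e | e⟩
        · omega
        · have := e.2.2 b hbO.1 (by omega); omega
        · omega
  · have hoa : o < a := by omega
    rcases hb with hb | rfl
    · obtain ⟨hb, hbo⟩ := (h.hO' b).1 hb
      have := h.hO _ hb
      rw [hi a b ha (Or.inl hb) hab]
      constructor
      · rintro (⟨q, h1, h2, h3⟩ | e | e)
        · exact ⟨q, (hB' q).2 (Or.inl ⟨h1, by omega⟩), h2, h3⟩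
        · omega
        · omega
      · rintro ⟨q, h1, h2, h3⟩
        left
        rcases (hB' q).1 h1 with e | ⟨_, e | e⟩
        · exact ⟨q, e.1, h2, h3⟩
        · omega
        · have := e.2.2 b hb; omega
    · rw [hsl, hi a l ha (Or.inr rfl) hal]
      constructor
      · rintro (⟨q, h1, h2, h3⟩ | e | ⟨_, _, _, e⟩)
        · exact ⟨q, (hB' q).2 (Or.inl ⟨h1, by omega⟩), h2, by omega⟩
        · omega
        · obtain ⟨q, q1, q2, q3⟩ := hmax l ⟨a, ha, hal⟩
          have := q3 a ha hal
          exact ⟨q, (hB' q).2 (Or.inr ⟨e, Or.inr ⟨q1, by omega, fun q' hq' => q3 q' hq' (h.hO _ hq')⟩⟩), this, by omega⟩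
      · rintro ⟨q, h1, h2, h3⟩
        rcases (hB' q).1 h1 with e | ⟨e0, e | e⟩
        · exact Or.inl ⟨q, e.1, h2, h.hO _ (hB _ e.1)⟩
        · omega
        · exact Or.inr (Or.inr ⟨hoa, hal, by omega, e0⟩)
end abstractsem

theorem ml_id {α : Type} (l : List α) : ml id l = l := by
  rcases List.eq_nil_or_concat l with rfl | ⟨l, a, rfl⟩
  · rfl
  · simp

theorem gst_map {α β : Type} (g : α → α) (h : β → β) (f : α → β) (hf : ∀ a, f (g a) = h (f a))
    (new : α) (s : Stp) (l : List α) : (gst g new s l).map f = gst h (f new) s (l.map f) := by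
  rcases s with _ | _ | _ | k
  · simp [gst]
  · exact ml_map g h f hf l
  · simp [gst, List.map_tail]
  · simp [gst, ml_map g h f hf, List.map_take, List.map_drop]

def pT : ℕ × Bool → ℕ × Bool := fun p => (p.1, true)

def lab : List Stp → List (ℕ × Bool)
  | [] => []
  | s :: w => gst pT (w.length, false) s (lab w)

theorem lab_snd (w : List Stp) : (lab w).map Prod.snd = autSt stB [] w := by
  induction w with
  | nil => rfl
  | cons s w ih =>
    rw [lab, gst_map pT bT Prod.snd (fun _ => rfl), ih]; rfl

theorem lab_fst (w : List Stp) : (lab w).map Prod.fst = opl w := by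
  induction w with
  | nil => rfl
  | cons s w ih =>
    rw [lab, gst_map pT id Prod.fst (fun _ => rfl), ih]
    rcases s with _ | _ | _ | k
    · rfl
    · simp [gst, ml_id, opl]
    · simp [gst, opl]
    · simp [gst, ml_id, opl, List.eraseIdx_eq_take_drop_succ]

def Bar (w : List Stp) (q : ℕ) : Prop := (q, true) ∈ lab w

theorem Bar.opn {w : List Stp} {q : ℕ} (h : Bar w q) : q ∈ opl w := by
  rw [← lab_fst]; exact List.mem_map_of_mem (f := Prod.fst) h

theorem mem_ml (l : List (ℕ × Bool)) (hl : (l.map Prod.fst).Pairwise (· < ·)) (q : ℕ) :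
    (q, true) ∈ ml pT l ↔ (q, true) ∈ l ∨ (q ∈ l.map Prod.fst ∧ ∀ q1 ∈ l.map Prod.fst, q1 ≤ q) := by
  rcases List.eq_nil_or_concat l with rfl | ⟨l, ⟨a, b⟩, rfl⟩
  · simp
  · rw [List.concat_eq_append] at hl ⊢
    rw [List.map_append, List.pairwise_append] at hl
    have h3 : ∀ x ∈ l.map Prod.fst, x < a := fun x hx => hl.2.2 x hx a (by simp)
    rw [ml_concat, List.map_append]
    simp only [List.mem_append, List.mem_singleton, pT, List.map_cons, List.map_nil, Prod.mk.injEq, and_true]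
    constructor
    · rintro (h | rfl)
      · exact Or.inl (Or.inl h)
      · refine Or.inr ⟨Or.inr rfl, ?_⟩
        rintro q1 (h | rfl)
        · exact (h3 _ h).le
        · exact le_rfl
    · rintro ((h | ⟨rfl, _⟩) | ⟨h | rfl, h2⟩)
      · exact Or.inl h
      · exact Or.inr rfl
      · have := h2 a (Or.inr rfl)
        have := h3 q h
        omega
      · exact Or.inr rfl

def ArcW (w : List Stp) (x y : ℕ) : Prop := x ≤ y ∧ y < w.length ∧ fn w x = y ∧ x ∉ opl w
def OpnW (w : List Stp) (x : ℕ) : Prop := x ∈ opl w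

theorem step_op {w : List Stp} (hw : Valid w) :
    AddOp w.length (ArcW w) (OpnW w) (ArcW (.op :: w)) (OpnW (.op :: w)) := by
  obtain ⟨f1, f2, f3⟩ := fn_facts w hw
  refine ⟨fun x y h => ⟨h.1, h.2.1⟩, fun x h => opl_lt h, fun x y => ?_, fun x => ?_⟩
  · simp only [ArcW, opl, fn, List.length_cons, List.mem_append, List.mem_singleton]
    constructor
    · rintro ⟨h1, h2, h3, h4⟩
      push Not at h4
      refine ⟨h1, ?_, h3, h4.1⟩
      by_contra hy
      have : y = w.length := by omega
      have h5 := f3 x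
      rw [h3, this, f2 _ le_rfl] at h5
      omega
    · rintro ⟨h1, h2, h3, h4⟩
      refine ⟨h1, by omega, h3, ?_⟩
      rintro (h | h)
      · exact h4 h
      · omega
  · simp [OpnW, opl]

theorem step_fx {w : List Stp} (hw : Valid w) :
    AddArc w.length w.length (ArcW w) (OpnW w) (ArcW (.fx :: w)) (OpnW (.fx :: w)) := by
  obtain ⟨f1, f2, f3⟩ := fn_facts w hw
  refine ⟨fun x y h => ⟨h.1, h.2.1⟩, fun x h => opl_lt h, Or.inl rfl, fun x y => ?_, fun x => ?_⟩
  · simp only [ArcW, opl, fn, List.length_cons]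
    constructor
    · rintro ⟨h1, h2, h3, h4⟩
      by_cases hy : y < w.length
      · exact Or.inl ⟨h1, hy, h3, h4⟩
      · have : y = w.length := by omega
        have h5 := f3 x
        rw [h3, this, f2 _ le_rfl] at h5
        exact Or.inr ⟨h5.symm, this⟩
    · rintro (⟨h1, h2, h3, h4⟩ | ⟨rfl, rfl⟩)
      · exact ⟨h1, by omega, h3, h4⟩
      · exact ⟨le_rfl, by omega, f2 _ le_rfl, fun h => lt_irrefl _ (opl_lt h)⟩
  · simp only [OpnW, opl]
    constructor
    · intro h; exact ⟨h, (opl_lt h).ne⟩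
    · exact fun h => h.1

theorem step_cl {w : List Stp} {k : ℕ} (hw : Valid w) (hk : k < (opl w).length) :
    AddArc w.length ((opl w).getD k 0) (ArcW w) (OpnW w) (ArcW (.cl k :: w)) (OpnW (.cl k :: w)) := by
  obtain ⟨f1, f2, f3⟩ := fn_facts w hw
  have ho := cl_mem hk
  have hm := mem_cl hk
  refine ⟨fun x y h => ⟨h.1, h.2.1⟩, fun x h => opl_lt h, Or.inr ho, fun x y => ?_, fun x => hm x⟩
  simp only [ArcW, hm, fn, List.length_cons]
  generalize (opl w).getD k 0 = o at *
  have hol := opl_lt ho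
  constructor
  · rintro ⟨h1, h2, h3, h4⟩
    by_cases hx : x = w.length
    · subst hx
      rw [Function.update_self] at h3
      omega
    rw [Function.update_of_ne hx] at h3
    by_cases hx' : x = o
    · rw [hx', Function.update_self] at h3
      exact Or.inr ⟨hx', h3.symm⟩
    · rw [Function.update_of_ne hx'] at h3
      left
      refine ⟨h1, ?_, h3, by tauto⟩
      by_contra hy
      have : y = w.length := by omega
      have h5 := f3 x
      rw [h3, this, f2 _ le_rfl] at h5
      exact hx h5.symm
  · rintro (⟨h1, h2, h3, h4⟩ | ⟨rfl, rfl⟩)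
    · have hx' : x ≠ o := by rintro rfl; exact h4 ho
      refine ⟨h1, by omega, ?_, by tauto⟩
      rw [Function.update_of_ne (by omega), Function.update_of_ne hx', h3]
    · refine ⟨hol.le, by omega, ?_, by tauto⟩
      rw [Function.update_of_ne (by omega), Function.update_self]

theorem bar_op (w : List Stp) (q : ℕ) : Bar (.op :: w) q ↔ Bar w q := by
  simp [Bar, lab, gst]

theorem bar_fx (w : List Stp) (q : ℕ) : Bar (.fx :: w) q ↔ Bar w q ∨
    (q ∈ opl w ∧ ∀ q1 ∈ opl w, q1 ≤ q) := by
  have := mem_ml (lab w) (by rw [lab_fst]; exact (opl_sorted w).1) q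
  rw [lab_fst] at this
  exact this

theorem lab_split {w : List Stp} {k : ℕ} (hk : k < (opl w).length) : ∃ pre b post,
    lab w = pre ++ ((opl w).getD k 0, b) :: post ∧ pre.length = k ∧
    opl w = pre.map Prod.fst ++ (opl w).getD k 0 :: post.map Prod.fst ∧
    (∀ x ∈ pre.map Prod.fst, x < (opl w).getD k 0) ∧ (∀ x ∈ post.map Prod.fst, (opl w).getD k 0 < x) ∧
    (pre.map Prod.fst).Pairwise (· < ·) ∧ (post.map Prod.fst).Pairwise (· < ·) := by
  have hk2 : k < (lab w).length := by rw [← lab_fst, List.length_map] at hk; exact hk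
  have e : (lab w)[k].1 = (opl w).getD k 0 := by
    rw [List.getD_eq_getElem _ _ hk]
    simp [← lab_fst]
  have hsp : lab w = (lab w).take k ++ ((opl w).getD k 0, (lab w)[k].2) :: (lab w).drop (k+1) := by
    rw [← e]
    simp
  have h2 : opl w = ((lab w).take k).map Prod.fst ++ (opl w).getD k 0 :: ((lab w).drop (k+1)).map Prod.fst := by
    have := congrArg (List.map Prod.fst) hsp
    rw [lab_fst] at this
    simpa using this
  have h3 := (opl_sorted w).1
  generalize (opl w).getD k 0 = o at *
  rw [h2, List.pairwise_append, List.pairwise_cons] at h3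
  exact ⟨_, _, _, hsp, by simp; omega, h2, fun x hx => h3.2.2 x hx o (by simp), fun x hx => h3.2.1.1 x hx, h3.1, h3.2.1.2⟩

theorem bar_lt {w : List Stp} {q : ℕ} (h : Bar w q) : q < w.length := opl_lt h.opn

theorem bar_cl {w : List Stp} {k : ℕ} (hk : k < (opl w).length)
    (hno : ∀ q, Bar w q → ¬ q < (opl w).getD k 0) (q : ℕ) :
    Bar (.cl k :: w) q ↔ (Bar w q ∧ (opl w).getD k 0 < q) ∨ ((∃ a, OpnW w a ∧ a < (opl w).getD k 0) ∧
      ((OpnW w q ∧ q < (opl w).getD k 0 ∧ ∀ q1, OpnW w q1 → q1 < (opl w).getD k 0 → q1 ≤ q) ∨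
        (OpnW w q ∧ (opl w).getD k 0 < q ∧ ∀ q1, OpnW w q1 → q1 ≤ q))) := by
  obtain ⟨pre, b, post, h1, h2, h3, h4, h5, h6, h7⟩ := lab_split hk
  generalize (opl w).getD k 0 = o at *
  have hO : ∀ x, OpnW w x ↔ x ∈ pre.map Prod.fst ∨ x = o ∨ x ∈ post.map Prod.fst := by
    intro x; unfold OpnW; rw [h3]; simp only [List.mem_append, List.mem_cons]
  have hB : ∀ x, Bar w x ↔ (x, true) ∈ pre ∨ (x = o ∧ b = true) ∨ (x, true) ∈ post := by
    intro x; unfold Bar; rw [h1]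
    simp only [List.mem_append, List.mem_cons, Prod.mk.injEq, @eq_comm _ true b]
  have hpm : ∀ x, (x, true) ∈ pre → x < o := fun x hx => h4 x (List.mem_map_of_mem (f := Prod.fst) hx)
  have hpp : ∀ x, (x, true) ∈ post → o < x := fun x hx => h5 x (List.mem_map_of_mem (f := Prod.fst) hx)
  have hpre : ∀ x, (x, true) ∉ pre := fun x hx => hno x ((hB x).2 (Or.inl hx)) (hpm x hx)
  rcases k with _ | k
  · have : pre = [] := List.length_eq_zero_iff.1 h2
    subst this
    have hno2 : ¬ ∃ a, OpnW w a ∧ a < o := by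
      rintro ⟨a, h, h'⟩
      rcases (hO a).1 h with h | h | h
      · simp at h
      · omega
      · have := h5 a h; omega
    have e : Bar (.cl 0 :: w) q ↔ (q, true) ∈ post := by
      unfold Bar; rw [lab, h1]; rfl
    rw [e, hB]
    constructor
    · intro h; exact Or.inl ⟨Or.inr (Or.inr h), hpp q h⟩
    · rintro (⟨h | h | h, h'⟩ | h)
      · simp at h
      · omega
      · exact h
      · exact (hno2 h.1).elim
  · have e : Bar (.cl (k+1) :: w) q ↔ (q, true) ∈ ml pT pre ∨ (q, true) ∈ ml pT post := by
      unfold Bar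
      have t1 : (pre ++ (o, b) :: post).take (k+1) = pre := by rw [← h2, List.take_left']; rfl
      have t2 : (pre ++ (o, b) :: post).drop (k+2) = post := by
        have : pre ++ (o, b) :: post = (pre ++ [(o, b)]) ++ post := by simp
        rw [this, List.drop_left']; simp [h2]
      rw [lab, h1]
      simp only [gst]
      rw [t1, t2, List.mem_append]
    have hex : ∃ a, OpnW w a ∧ a < o := by
      rcases pre with _ | ⟨a, pre⟩
      · simp at h2
      · exact ⟨a.1, (hO _).2 (Or.inl (by simp)), h4 _ (by simp)⟩
    rw [e, mem_ml _ h6, mem_ml _ h7]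
    constructor
    · rintro ((h | ⟨h, h'⟩) | h | ⟨h, h'⟩)
      · exact (hpre q h).elim
      · right; refine ⟨hex, Or.inl ⟨(hO q).2 (Or.inl h), h4 q h, fun q1 hq1 hlt => ?_⟩⟩
        rcases (hO q1).1 hq1 with e | e | e
        · exact h' q1 e
        · omega
        · have := h5 q1 e; omega
      · exact Or.inl ⟨(hB q).2 (Or.inr (Or.inr h)), hpp q h⟩
      · right; refine ⟨hex, Or.inr ⟨(hO q).2 (Or.inr (Or.inr h)), h5 q h, fun q1 hq1 => ?_⟩⟩
        have := h5 q h
        rcases (hO q1).1 hq1 with e | e | e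
        · have := h4 q1 e; omega
        · omega
        · exact h' q1 e
    · rintro (⟨h, h'⟩ | ⟨_, ⟨h, h', h''⟩ | ⟨h, h', h''⟩⟩)
      · rcases (hB q).1 h with h | h | h
        · exact (hpre q h).elim
        · omega
        · exact Or.inr (Or.inl h)
      · rcases (hO q).1 h with h | h | h
        · exact Or.inl (Or.inr ⟨h, fun q1 hq1 => h'' q1 ((hO _).2 (Or.inl hq1)) (h4 _ hq1)⟩)
        · omega
        · have := h5 q h; omega
      · rcases (hO q).1 h with h | h | h
        · have := h4 q h; omega
        · omega
        · exact Or.inr (Or.inr ⟨h, fun q1 hq1 => h'' q1 ((hO _).2 (Or.inr (Or.inr hq1)))⟩)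

theorem al_fx (w : List Stp) : alB .fx (autSt stB [] w) ↔ ∀ q, ¬ Bar w q := by
  rw [← lab_snd]
  constructor
  · rintro ⟨k, hk⟩ q hq
    have h1 : true ∈ (lab w).map Prod.snd := List.mem_map_of_mem (f := Prod.snd) hq
    rw [hk] at h1
    simp at h1
  · intro h
    refine ⟨(lab w).length, ?_⟩
    rw [List.eq_replicate_iff]
    refine ⟨by simp, ?_⟩
    intro b hb
    rw [List.mem_map] at hb
    obtain ⟨⟨q, b'⟩, hq, rfl⟩ := hb
    cases b'
    · rfl
    · exact (h q hq).elim

theorem al_cl {w : List Stp} {k : ℕ} (hk : k < (opl w).length) :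
    alB (.cl k) (autSt stB [] w) ↔ ∀ q, Bar w q → ¬ q < (opl w).getD k 0 := by
  rw [← lab_snd]
  obtain ⟨pre, b, post, h1, h2, h3, h4, h5, h6, h7⟩ := lab_split hk
  generalize (opl w).getD k 0 = o at *
  have hB : ∀ x, Bar w x ↔ (x, true) ∈ pre ∨ (x = o ∧ b = true) ∨ (x, true) ∈ post := by
    intro x; unfold Bar; rw [h1]
    simp only [List.mem_append, List.mem_cons, Prod.mk.injEq, @eq_comm _ true b]
  have hpm : ∀ x, (x, true) ∈ pre → x < o := fun x hx => h4 x (List.mem_map_of_mem (f := Prod.fst) hx)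
  have hpp : ∀ x, (x, true) ∈ post → o < x := fun x hx => h5 x (List.mem_map_of_mem (f := Prod.fst) hx)
  constructor
  · rintro ⟨b', r, hr⟩ q hq hlt
    rw [h1, List.map_append] at hr
    have := (List.append_inj hr (by simp [h2])).1
    rcases (hB q).1 hq with h | h | h
    · have h8 : true ∈ pre.map Prod.snd := List.mem_map_of_mem (f := Prod.snd) h
      rw [this] at h8
      simp at h8
    · omega
    · have := hpp q h; omega
  · intro h
    refine ⟨b, post.map Prod.snd, ?_⟩
    rw [h1, List.map_append]
    congr 1
    rw [List.eq_replicate_iff]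
    refine ⟨by simp [h2], ?_⟩
    intro b hb
    rw [List.mem_map] at hb
    obtain ⟨⟨q, b'⟩, hq, rfl⟩ := hb
    cases b'
    · rfl
    · exact (h q ((hB q).2 (Or.inl hq)) (hpm q hq)).elim

theorem opn_max (w : List Stp) (b : ℕ) (h : ∃ a, OpnW w a ∧ a < b) :
    ∃ q, OpnW w q ∧ q < b ∧ ∀ q1, OpnW w q1 → q1 < b → q1 ≤ q := by
  obtain ⟨a, ha, hab⟩ := h
  have hne : ((opl w).toFinset.filter (· < b)).Nonempty := ⟨a, by simp; exact ⟨ha, hab⟩⟩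
  have hm := Finset.max'_mem _ hne
  rw [Finset.mem_filter, List.mem_toFinset] at hm
  exact ⟨_, hm.1, hm.2, fun q1 h1 h2 => Finset.le_max' _ _ (by simp; exact ⟨h1, h2⟩)⟩

theorem acc_good (w : List Stp) (hw : Valid w) :
    (autAcc alB stB [] w ↔ Good (ArcW w) (OpnW w)) ∧
    (autAcc alB stB [] w → BInv w.length (ArcW w) (OpnW w) (Bar w)) := by
  induction w with
  | nil =>
    refine ⟨⟨fun _ => ⟨?_, ?_⟩, fun _ => trivial⟩, fun _ => ?_⟩
    · rintro ⟨a, x, y, u, z, e1, e2, e3, a1, a2, r⟩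
      have := a1.2.1; simp at this
    · rintro ⟨a, x, c, y, u, z, e1, e2, e3, e4, a1, r1, a2, r2⟩
      have := a1.2.1; simp at this
    · intro o o' h; simp [OpnW, opl] at h
  | cons s w ih =>
    rcases s with _ | _ | k
    · obtain ⟨i1, i2⟩ := ih hw
      have hs := step_op (w := w) hw
      refine ⟨?_, fun h => hs.inv (fun q hq => hq.opn) (bar_op w) (i2 h.1)⟩
      rw [hs.good, ← i1]
      simp [autAcc, alB]
    · obtain ⟨i1, i2⟩ := ih hw
      have hs := step_fx (w := w) hw
      constructor
      · rw [hs.good, ← i1, autAcc, al_fx]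
        apply and_congr_right
        intro hacc
        have hi := i2 hacc
        constructor
        · intro h o1 ho1 hlt hsep
          obtain ⟨q, hq, _⟩ := (hi o1 _ ho1 (Or.inr rfl) hlt).1 hsep
          exact h q hq
        · intro h q hq
          exact h q hq.opn (bar_lt hq) ((hi q _ hq.opn (Or.inr rfl) (bar_lt hq)).2 ⟨q, hq, le_rfl, bar_lt hq⟩)
      · intro h
        have hnb := (al_fx w).1 h.2
        refine hs.inv (fun q hq => hq.opn) (fun q hq => (hnb q hq).elim) (fun q => ?_) (opn_max w) (i2 h.1)
        rw [bar_fx]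
        constructor
        · rintro (h | ⟨h1, h2⟩)
          · exact (hnb q h).elim
          · exact Or.inr ⟨⟨q, h1, opl_lt h1⟩, Or.inl ⟨h1, opl_lt h1, fun q1 hq1 _ => h2 q1 hq1⟩⟩
        · rintro (⟨h, _⟩ | ⟨_, ⟨h1, _, h2⟩ | ⟨h1, h2, _⟩⟩)
          · exact (hnb q h).elim
          · exact Or.inr ⟨h1, fun q1 hq1 => h2 q1 hq1 (opl_lt hq1)⟩
          · have := opl_lt h1; omega
    · obtain ⟨i1, i2⟩ := ih hw.1
      have hs := step_cl hw.1 hw.2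
      constructor
      · rw [hs.good, ← i1, autAcc, al_cl hw.2]
        apply and_congr_right
        intro hacc
        have hi := i2 hacc
        constructor
        · intro h o1 ho1 hlt hsep
          obtain ⟨q, hq, h1, h2⟩ := (hi o1 _ ho1 (Or.inl (cl_mem hw.2)) hlt).1 hsep
          exact h q hq h2
        · intro h q hq hlt
          exact h q hq.opn hlt ((hi q _ hq.opn (Or.inl (cl_mem hw.2)) hlt).2 ⟨q, hq, le_rfl, hlt⟩)
      · intro h
        have hnb := (al_cl hw.2).1 h.2
        exact hs.inv (fun q hq => hq.opn) hnb (bar_cl hw.2 hnb) (opn_max w) (i2 h.1)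

theorem accB_valid (w : List Stp) (h : autAcc alB stB [] w) : Valid w := by
  induction w with
  | nil => trivial
  | cons s w ih =>
    rcases s with _ | _ | k
    · exact ih h.1
    · exact ih h.1
    · refine ⟨ih h.1, ?_⟩
      obtain ⟨b, r, hr⟩ := h.2
      have := congrArg List.length hr
      rw [← lab_snd, List.length_map] at this
      rw [← lab_fst, List.length_map, this]
      simp

theorem stH_len (w : List Stp) (h : Valid w) : autSt stH 0 w = (opl w).length := by
  induction w with
  | nil => rfl
  | cons s w ih =>
    rcases s with _ | _ | k
    · simp [autSt, ih h, stH, opl]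
    · simp [autSt, ih h, stH, opl]
    · simp [autSt, ih h.1, stH, opl, List.length_eraseIdx, h.2]

theorem accH_valid (w : List Stp) (h : autAcc alH stH 0 w) : Valid w := by
  induction w with
  | nil => trivial
  | cons s w ih =>
    rcases s with _ | _ | k
    · exact ih h.1
    · exact ih h.1
    · refine ⟨ih h.1, ?_⟩
      have h2 := h.2
      rw [stH_len w (ih h.1)] at h2
      rw [h2.1]; exact h2.2

theorem accH_nst (w : List Stp) (hw : Valid w) : autAcc alH stH 0 w ↔ ¬ Nst (ArcW w) (OpnW w) := by
  induction w with
  | nil =>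
    refine ⟨fun _ => ?_, fun _ => trivial⟩
    rintro ⟨a, x, y, e1, e2, a1, r⟩
    have := a1.2.1; simp at this
  | cons s w ih =>
    rcases s with _ | _ | k
    · rw [(step_op (w := w) hw).nst, ← ih hw]; simp [autAcc, alH]
    · rw [(step_fx (w := w) hw).nst, ← ih hw]; simp [autAcc, alH]
    · rw [(step_cl hw.1 hw.2).nst, ← ih hw.1, autAcc]
      apply and_congr_right
      intro _
      rw [stH_len w hw.1]
      obtain ⟨pre, b, post, h1, h2, h3, h4, h5, h6, h7⟩ := lab_split hw.2
      have hol := opl_lt (cl_mem hw.2)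
      have hk := hw.2
      simp only [alH]
      generalize (opl w).getD k 0 = o at *
      constructor
      · rintro ⟨rfl, _⟩
        right
        intro o1 ho1 hlt
        have : pre = [] := List.length_eq_zero_iff.1 h2
        subst this
        unfold OpnW at ho1
        rw [h3] at ho1
        simp only [List.map_nil, List.nil_append, List.mem_cons] at ho1
        rcases ho1 with h | h
        · omega
        · have := h5 _ h; omega
      · rintro (h | h)
        · omega
        · rcases pre with _ | ⟨a, pre⟩
          · simp at h2; omega
          · exact (h a.1 (by unfold OpnW; rw [h3]; simp) (h4 _ (by simp))).elim

def exf {n : ℕ} (σ : Equiv.Perm (Fin n)) (i : ℕ) : ℕ := if h : i < n then (σ ⟨i, h⟩ : ℕ) else i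

def Efn (n : ℕ) (f : ℕ → ℕ) : Prop := (∀ x, f (f x) = x) ∧ ∀ x, n ≤ x → f x = x

theorem Efn.lt {n : ℕ} {f : ℕ → ℕ} (h : Efn n f) {x : ℕ} (hx : x < n) : f x < n := by
  by_contra hn
  have := h.2 _ (not_lt.1 hn)
  rw [h.1] at this; omega

def Nf (f : ℕ → ℕ) : Prop := ∃ a x, a < x ∧ x < f x ∧ f x < f a
def Lf (f : ℕ → ℕ) : Prop := ∃ o x u, o < x ∧ x ≤ f x ∧ x < u ∧ u ≤ f u ∧ f x < f u ∧ f u < f o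
def Gf (f : ℕ → ℕ) : Prop :=
  ∃ a x c u, a < x ∧ x < c ∧ c < f x ∧ f x < u ∧ u ≤ f u ∧ f x < f a ∧ f u < f c
def Gr (f : ℕ → ℕ) : Prop :=
  ∃ a c w x, c < w ∧ w ≤ f w ∧ f w < x ∧ x < f c ∧ f c < f x ∧ f x < f a ∧ a < x

theorem ext_val {n : ℕ} (σ : Equiv.Perm (Fin n)) (i : Fin n) : exf σ i = σ i := by
  simp [exf]

theorem ext_Efn {n : ℕ} {σ : Equiv.Perm (Fin n)} (h : σ⁻¹ = σ) : Efn n (exf σ) := by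
  have hs : ∀ i, σ (σ i) = i := by
    intro i
    calc σ (σ i) = σ⁻¹ (σ i) := by rw [h]
      _ = i := by simp
  refine ⟨fun x => ?_, fun x hx => ?_⟩
  · by_cases hx : x < n
    · have := ext_val σ ⟨x, hx⟩
      simp only at this
      rw [this, ext_val, hs]
    · simp [exf, hx]
  · simp [exf, not_lt.2 hx]

theorem contains_iff {n k : ℕ} (σ : Equiv.Perm (Fin n)) (p : Equiv.Perm (Fin k)) (hp : ∀ a, p (p a) = a) :
    Contains σ p ↔ ∃ g : Fin k → ℕ, StrictMono g ∧ (∀ i, g i < n) ∧ StrictMono (fun v => exf σ (g (p v))) := by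
  constructor
  · rintro ⟨f, hf, h⟩
    refine ⟨fun i => f i, fun a b hab => hf hab, fun i => (f i).2, fun a b hab => ?_⟩
    simp only [ext_val]
    have := (h (p a) (p b)).1 (by rw [hp, hp]; exact hab)
    exact this
  · rintro ⟨g, h1, h2, h3⟩
    refine ⟨fun i => ⟨g i, h2 i⟩, fun a b hab => h1 hab, fun a b => ?_⟩
    have := h3.lt_iff_lt (a := p a) (b := p b)
    simp only [hp] at this
    rw [← this]
    have e1 := ext_val σ ⟨g a, h2 a⟩
    have e2 := ext_val σ ⟨g b, h2 b⟩
    simp only at e1 e2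
    rw [e1, e2]; rfl

theorem c4321 {n : ℕ} (σ : Equiv.Perm (Fin n)) : Contains σ p4321 ↔ ∃ i1 i2 i3 i4, i1 < i2 ∧ i2 < i3 ∧ i3 < i4 ∧ i4 < n ∧
    exf σ i4 < exf σ i3 ∧ exf σ i3 < exf σ i2 ∧ exf σ i2 < exf σ i1 := by
  rw [contains_iff]
  · constructor
    · rintro ⟨g, h1, h2, h3⟩
      refine ⟨g 0, g 1, g 2, g 3, h1 (by decide), h1 (by decide), h1 (by decide), h2 _, ?_, ?_, ?_⟩
      · exact h3 (show (0 : Fin 4) < 1 by decide)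
      · exact h3 (show (1 : Fin 4) < 2 by decide)
      · exact h3 (show (2 : Fin 4) < 3 by decide)
    · rintro ⟨i1, i2, i3, i4, a1, a2, a3, a4, a5, a6, a7⟩
      refine ⟨![i1, i2, i3, i4], ?_, ?_, ?_⟩
      · rw [Fin.strictMono_iff_lt_succ]; intro i; fin_cases i <;> simpa
      · intro i; fin_cases i <;> simp <;> omega
      · rw [Fin.strictMono_iff_lt_succ]; intro i; fin_cases i <;> simpa [p4321]
  · intro a; fin_cases a <;> simp [p4321]

theorem c4231 {n : ℕ} (σ : Equiv.Perm (Fin n)) : Contains σ p4231 ↔ ∃ i1 i2 i3 i4, i1 < i2 ∧ i2 < i3 ∧ i3 < i4 ∧ i4 < n ∧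
    exf σ i4 < exf σ i2 ∧ exf σ i2 < exf σ i3 ∧ exf σ i3 < exf σ i1 := by
  rw [contains_iff]
  · constructor
    · rintro ⟨g, h1, h2, h3⟩
      refine ⟨g 0, g 1, g 2, g 3, h1 (by decide), h1 (by decide), h1 (by decide), h2 _, ?_, ?_, ?_⟩
      · exact h3 (show (0 : Fin 4) < 1 by decide)
      · exact h3 (show (1 : Fin 4) < 2 by decide)
      · exact h3 (show (2 : Fin 4) < 3 by decide)
    · rintro ⟨i1, i2, i3, i4, a1, a2, a3, a4, a5, a6, a7⟩
      refine ⟨![i1, i2, i3, i4], ?_, ?_, ?_⟩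
      · rw [Fin.strictMono_iff_lt_succ]; intro i; fin_cases i <;> simpa
      · intro i; fin_cases i <;> simp <;> omega
      · rw [Fin.strictMono_iff_lt_succ]; intro i; fin_cases i <;> simpa [p4231]
  · intro a; fin_cases a <;> simp [p4231]

theorem c5276143 {n : ℕ} (σ : Equiv.Perm (Fin n)) : Contains σ p5276143 ↔ ∃ i1 i2 i3 i4 i5 i6 i7,
    i1 < i2 ∧ i2 < i3 ∧ i3 < i4 ∧ i4 < i5 ∧ i5 < i6 ∧ i6 < i7 ∧ i7 < n ∧
    exf σ i5 < exf σ i2 ∧ exf σ i2 < exf σ i7 ∧ exf σ i7 < exf σ i6 ∧ exf σ i6 < exf σ i1 ∧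
    exf σ i1 < exf σ i4 ∧ exf σ i4 < exf σ i3 := by
  rw [contains_iff]
  · constructor
    · rintro ⟨g, h1, h2, h3⟩
      refine ⟨g 0, g 1, g 2, g 3, g 4, g 5, g 6, h1 (by decide), h1 (by decide), h1 (by decide),
        h1 (by decide), h1 (by decide), h1 (by decide), h2 _, ?_, ?_, ?_, ?_, ?_, ?_⟩
      · exact h3 (show (0 : Fin 7) < 1 by decide)
      · exact h3 (show (1 : Fin 7) < 2 by decide)
      · exact h3 (show (2 : Fin 7) < 3 by decide)
      · exact h3 (show (3 : Fin 7) < 4 by decide)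
      · exact h3 (show (4 : Fin 7) < 5 by decide)
      · exact h3 (show (5 : Fin 7) < 6 by decide)
    · rintro ⟨i1, i2, i3, i4, i5, i6, i7, a1, a2, a3, a4, a5, a6, a7, b1, b2, b3, b4, b5, b6⟩
      refine ⟨![i1, i2, i3, i4, i5, i6, i7], ?_, ?_, ?_⟩
      · rw [Fin.strictMono_iff_lt_succ]; intro i; fin_cases i <;> simpa
      · intro i; fin_cases i <;> simp <;> omega
      · rw [Fin.strictMono_iff_lt_succ]; intro i; fin_cases i <;> simpa [p5276143]
  · intro a; fin_cases a <;> simp [p5276143]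

section arith

theorem two_pts {f : ℕ → ℕ} (hf : ∀ x, f (f x) = x) {i2 v2 i3 v3 o b : ℕ} (h2 : f i2 = v2) (h3 : f i3 = v3) (ho : f o = b)
    (hi : i2 < i3) (hv : v2 < v3) (a1 : o < i2) (a2 : o < v2) (a3 : i3 < b) (a4 : v3 < b) : Lf f := by
  have h2' : f v2 = i2 := by rw [← h2, hf]
  have h3' : f v3 = i3 := by rw [← h3, hf]
  by_cases e2 : i2 ≤ v2 <;> by_cases e3 : i3 ≤ v3
  · exact ⟨o, i2, i3, by omega, by omega, by omega, by omega, by omega, by omega⟩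
  · exact ⟨o, i2, v3, by omega, by omega, by omega, by omega, by omega, by omega⟩
  · exact ⟨o, v2, i3, by omega, by omega, by omega, by omega, by omega, by omega⟩
  · exact ⟨o, v2, v3, by omega, by omega, by omega, by omega, by omega, by omega⟩

theorem cross4231 {f : ℕ → ℕ} (hf : ∀ x, f (f x) = x) {i1 i2 i3 i4 v1 v2 v3 v4 : ℕ} (h1 : f i1 = v1) (h2 : f i2 = v2) (h3 : f i3 = v3) (h4 : f i4 = v4)
    (a1 : i1 < i2) (a2 : i2 < i3) (a3 : i3 < i4) (b1 : v4 < v2) (b2 : v2 < v3) (b3 : v3 < v1)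
    (c1 : i1 < v4) (c2 : v1 < i4) : Lf f ∨ Gr f := by
  have h1' : f v1 = i1 := by rw [← h1, hf]
  have h3' : f v3 = i3 := by rw [← h3, hf]
  have h4' : f v4 = i4 := by rw [← h4, hf]
  by_cases e1 : i3 < v1
  · exact Or.inl (two_pts hf h2 h3 h1 a2 b2 (by omega) (by omega) (by omega) (by omega))
  by_cases e2 : v4 < i2
  · exact Or.inl (two_pts hf h2 h3 h4' a2 b2 (by omega) (by omega) (by omega) (by omega))
  have e3 : i3 ≠ v1 := by rintro rfl; omega
  have e4 : i2 ≠ v4 := by rintro rfl; omega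
  right
  exact ⟨v4, i1, i2, v3, by omega, by omega, by omega, by omega, by omega, by omega, by omega⟩

theorem any4231 {f : ℕ → ℕ} (hf : ∀ x, f (f x) = x) {i1 i2 i3 i4 v1 v2 v3 v4 : ℕ} (h1 : f i1 = v1) (h2 : f i2 = v2) (h3 : f i3 = v3) (h4 : f i4 = v4)
    (a1 : i1 < i2) (a2 : i2 < i3) (a3 : i3 < i4) (b1 : v4 < v2) (b2 : v2 < v3) (b3 : v3 < v1) :
    Lf f ∨ Gr f := by
  have h1' : f v1 = i1 := by rw [← h1, hf]
  have h2' : f v2 = i2 := by rw [← h2, hf]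
  have h3' : f v3 = i3 := by rw [← h3, hf]
  have h4' : f v4 = i4 := by rw [← h4, hf]
  by_cases c1 : i1 < v4
  · by_cases c2 : v1 < i4
    · exact cross4231 hf h1 h2 h3 h4 a1 a2 a3 b1 b2 b3 c1 c2
    · exact Or.inl (two_pts hf h2 h3 h1 a2 b2 (by omega) (by omega) (by omega) (by omega))
  · by_cases c3 : i1 = v4
    · subst c3
      exact Or.inl (two_pts hf h2 h3 h1 a2 b2 (by omega) (by omega) (by omega) (by omega))
    · by_cases c2 : i4 < v1
      · exact cross4231 hf h4' h2' h3' h1' b1 b2 b3 a1 a2 a3 (by omega) c2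
      · exact Or.inl (two_pts hf h2 h3 h4' a2 b2 (by omega) (by omega) (by omega) (by omega))

theorem half7 {f : ℕ → ℕ} (hf : ∀ x, f (f x) = x) {i1 i2 i3 i4 i5 i6 i7 v1 v2 v3 v4 v5 v6 v7 : ℕ} (h1 : f i1 = v1) (h2 : f i2 = v2) (h3 : f i3 = v3)
    (h4 : f i4 = v4) (h5 : f i5 = v5) (h6 : f i6 = v6) (h7 : f i7 = v7)
    (a1 : i1 < i2) (a2 : i2 < i3) (a3 : i3 < i4) (a4 : i4 < i5) (a5 : i5 < i6) (a6 : i6 < i7)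
    (b1 : v5 < v2) (b2 : v2 < v7) (b3 : v7 < v6) (b4 : v6 < v1) (b5 : v1 < v4) (b6 : v4 < v3)
    (c : i5 ≤ v1) : Lf f ∨ Gr f := by
  have h1' : f v1 = i1 := by rw [← h1, hf]
  have h2' : f v2 = i2 := by rw [← h2, hf]
  have h5' : f v5 = i5 := by rw [← h5, hf]
  have h6' : f v6 = i6 := by rw [← h6, hf]
  have h7' : f v7 = i7 := by rw [← h7, hf]
  by_cases d1 : v2 ≤ i1
  · have : v2 ≠ i1 := by rintro rfl; omega
    right
    exact ⟨i3, v5, v2, i4, by omega, by omega, by omega, by omega, by omega, by omega, by omega⟩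
  by_cases d2 : v2 < i4
  · right
    by_cases e : i2 ≤ v2
    · exact ⟨i3, i1, i2, i4, by omega, by omega, by omega, by omega, by omega, by omega, by omega⟩
    · exact ⟨i3, i1, v2, i4, by omega, by omega, by omega, by omega, by omega, by omega, by omega⟩
  by_cases d3 : i6 < v1
  · exact Or.inl (two_pts hf h2 h6 h1 (by omega) (by omega) (by omega) (by omega) (by omega) (by omega))
  · have : i6 ≠ v1 := by rintro rfl; omega
    right
    exact ⟨v7, i1, i2, v6, by omega, by omega, by omega, by omega, by omega, by omega, by omega⟩
end arith

theorem avoid_A {n : ℕ} {σ : Equiv.Perm (Fin n)} (h : σ⁻¹ = σ) :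
    (Avoids σ p4231 ∧ Avoids σ p5276143) ↔ ¬ Lf (exf σ) ∧ ¬ Gr (exf σ) := by
  have hE := ext_Efn h
  have hf := hE.1
  unfold Avoids
  rw [c4231, c5276143, ← not_or, ← not_or, not_iff_not]
  set f := exf σ
  have lt_of : ∀ x, x ≠ f x → f x < n := by
    intro x hx
    by_contra hn
    have := hE.2 _ (not_lt.1 hn)
    rw [hf] at this; omega
  constructor
  · rintro (⟨i1, i2, i3, i4, a1, a2, a3, a4, a5, a6, a7⟩ |
      ⟨i1, i2, i3, i4, i5, i6, i7, a1, a2, a3, a4, a5, a6, a7, b1, b2, b3, b4, b5, b6⟩)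
    · exact any4231 hf rfl rfl rfl rfl a1 a2 a3 a5 a6 a7
    · by_cases c : i5 ≤ f i1
      · exact half7 hf rfl rfl rfl rfl rfl rfl rfl a1 a2 a3 a4 a5 a6 b1 b2 b3 b4 b5 b6 c
      · exact half7 hf (hf i5) (hf i2) (hf i7) (hf i6) (hf i1) (hf i4) (hf i3)
          b1 b2 b3 b4 b5 b6 a1 a2 a3 a4 a5 a6 (by omega)
  · have hL : Lf f → ∃ i1 i2 i3 i4, i1 < i2 ∧ i2 < i3 ∧ i3 < i4 ∧ i4 < n ∧
        f i4 < f i2 ∧ f i2 < f i3 ∧ f i3 < f i1 := by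
      rintro ⟨o, x, u, a1, a2, a3, a4, a5, a6⟩
      exact ⟨o, x, u, f o, a1, a3, by omega, lt_of _ (by omega), by rw [hf]; omega, a5, a6⟩
    rintro (h | ⟨a, c, w, x, a1, a2, a3, a4, a5, a6, a7⟩)
    · exact Or.inl (hL h)
    · have hlt := lt_of a (by omega)
      by_cases e1 : a < w
      · exact Or.inl (hL ⟨a, w, x, by omega, by omega, by omega, by omega, by omega, by omega⟩)
      have e2 : a ≠ w := by rintro rfl; omega
      have e3 : a ≠ f w := by rintro rfl; rw [hf] at a6; omega
      by_cases e4 : a < f w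
      · left
        exact ⟨c, w, f x, f a, a1, by omega, by omega, hlt, by rw [hf]; omega, by rw [hf]; omega, by rw [hf]; omega⟩
      · right
        refine ⟨c, w, a, x, f c, f x, f a, a1, by omega, by omega, by omega, by omega, by omega, hlt, ?_⟩
        rw [hf, hf, hf]; omega

theorem avoid_B {n : ℕ} {σ : Equiv.Perm (Fin n)} (h : σ⁻¹ = σ) :
    Avoids σ p4321 ↔ ¬ Nf (exf σ) := by
  have hE := ext_Efn h
  have hf := hE.1
  unfold Avoids
  rw [c4321, not_iff_not]
  set f := exf σ
  have lt_of : ∀ x, x ≠ f x → f x < n := by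
    intro x hx
    by_contra hn
    have := hE.2 _ (not_lt.1 hn)
    rw [hf] at this; omega
  constructor
  · rintro ⟨i1, i2, i3, i4, a1, a2, a3, a4, a5, a6, a7⟩
    by_cases c : i2 < f i2
    · exact ⟨i1, i2, a1, c, a7⟩
    · exact ⟨f i4, f i3, a5, by rw [hf]; omega, by rw [hf, hf]; omega⟩
  · rintro ⟨a, x, a1, a2, a3⟩
    refine ⟨a, x, f x, f a, a1, a2, a3, lt_of a (by omega), ?_⟩
    rw [hf, hf]; omega

/-! reversal -/
def rv (n : ℕ) (f : ℕ → ℕ) (i : ℕ) : ℕ := if i < n then n - 1 - f (n - 1 - i) else i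

theorem rv_apply {n : ℕ} {f : ℕ → ℕ} {i : ℕ} (h : i < n) : rv n f (n - 1 - i) = n - 1 - f i := by
  unfold rv
  rw [if_pos (by omega)]
  congr 2
  omega

theorem rv_Efn {n : ℕ} {f : ℕ → ℕ} (h : Efn n f) : Efn n (rv n f) := by
  refine ⟨fun x => ?_, fun x hx => ?_⟩
  · by_cases hx : x < n
    · have e : rv n f x = n - 1 - f (n - 1 - x) := if_pos hx
      rw [e, rv_apply (h.lt (by omega)), h.1]; omega
    · simp [rv, hx]
  · simp [rv, not_lt.2 hx]

theorem rv_rv {n : ℕ} {f : ℕ → ℕ} (h : Efn n f) : rv n (rv n f) = f := by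
  funext x
  by_cases hx : x < n
  · have e : rv n (rv n f) x = n - 1 - rv n f (n - 1 - x) := if_pos hx
    rw [e, rv_apply hx]
    have := h.lt hx; omega
  · rw [h.2 x (by omega)]; simp [rv, hx]

theorem Efn.lt_of {n : ℕ} {f : ℕ → ℕ} (h : Efn n f) {x : ℕ} (hx : x ≠ f x) : f x < n := by
  by_contra hn
  have := h.2 _ (not_lt.1 hn)
  rw [h.1] at this; omega

theorem Lf_rv {n : ℕ} {f : ℕ → ℕ} (h : Efn n f) (hL : Lf f) : Lf (rv n f) := by
  obtain ⟨o, x, u, a1, a2, a3, a4, a5, a6⟩ := hL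
  have hlt := h.lt_of (x := o) (by omega)
  refine ⟨n - 1 - f o, n - 1 - f u, n - 1 - f x, ?_⟩
  rw [rv_apply (by omega), rv_apply (by omega), rv_apply (by omega), h.1, h.1, h.1]
  omega

theorem Gf_rv {n : ℕ} {f : ℕ → ℕ} (h : Efn n f) (hL : Gf f) : Gr (rv n f) := by
  obtain ⟨a, x, c, u, a1, a2, a3, a4, a5, a6, a7⟩ := hL
  have hlt := h.lt_of (x := a) (by omega)
  have hlt := h.lt_of (x := c) (by omega)
  refine ⟨n - 1 - f a, n - 1 - f c, n - 1 - f u, n - 1 - f x, ?_⟩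
  rw [rv_apply (by omega), rv_apply (by omega), rv_apply (by omega), rv_apply (by omega), h.1, h.1, h.1, h.1]
  omega

theorem Gr_rv {n : ℕ} {f : ℕ → ℕ} (h : Efn n f) (hL : Gr f) : Gf (rv n f) := by
  obtain ⟨a, c, w, x, a1, a2, a3, a4, a5, a6, a7⟩ := hL
  have hlt := h.lt_of (x := a) (by omega)
  refine ⟨n - 1 - f a, n - 1 - f x, n - 1 - f c, n - 1 - f w, ?_⟩
  rw [rv_apply (by omega), rv_apply (by omega), rv_apply (by omega), rv_apply (by omega), h.1, h.1, h.1, h.1]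
  omega

theorem card_perm (n : ℕ) (P : (ℕ → ℕ) → Prop) :
    Nat.card {σ : Equiv.Perm (Fin n) // σ⁻¹ = σ ∧ P (exf σ)} = {f | Efn n f ∧ P f}.ncard := by
  rw [← Nat.card_coe_set_eq]
  refine Nat.card_congr (Equiv.ofBijective
    (fun σ => (⟨exf σ.1, ext_Efn σ.2.1, σ.2.2⟩ : {f | Efn n f ∧ P f})) ⟨?_, ?_⟩)
  · rintro ⟨σ, hσ⟩ ⟨τ, hτ⟩ h
    have h' : exf σ = exf τ := congrArg Subtype.val h
    apply Subtype.ext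
    apply Equiv.ext
    intro i
    apply Fin.ext
    have := congrFun h' i
    rwa [ext_val, ext_val] at this
  · rintro ⟨f, hE, hP⟩
    have hinv : Function.Involutive (fun i : Fin n => (⟨f i, hE.lt i.2⟩ : Fin n)) := by
      intro i; apply Fin.ext; exact hE.1 i
    have he : exf hinv.toPerm = f := by
      funext x
      by_cases hx : x < n
      · simp [exf, hx]
      · simp [exf, hx, hE.2 x (not_lt.1 hx)]
    refine ⟨⟨hinv.toPerm, ?_, by rw [he]; exact hP⟩, Subtype.ext he⟩
    rw [inv_eq_iff_mul_eq_one]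
    ext i
    simp [hE.1]

theorem card_rv (n : ℕ) (P Q : (ℕ → ℕ) → Prop) (h1 : ∀ f, Efn n f → P f → Q (rv n f))
    (h2 : ∀ f, Efn n f → Q f → P (rv n f)) :
    {f | Efn n f ∧ P f}.ncard = {f | Efn n f ∧ Q f}.ncard := by
  have : {f | Efn n f ∧ Q f} = Set.image (rv n) {f | Efn n f ∧ P f} := by
    ext f
    constructor
    · rintro ⟨hE, hQ⟩
      exact ⟨rv n f, ⟨rv_Efn hE, h2 f hE hQ⟩, rv_rv hE⟩
    · rintro ⟨g, ⟨hE, hP⟩, rfl⟩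
      exact ⟨rv_Efn hE, h1 g hE hP⟩
  rw [this, Set.ncard_image_of_injOn]
  intro f hf g hg h
  have := congrArg (rv n) h
  rwa [rv_rv hf.1, rv_rv hg.1] at this

theorem opl_nil_mem {w : List Stp} (h : ∀ x, x ∈ opl w ↔ x ∈ (∅ : Finset ℕ)) : opl w = [] := by
  rw [List.eq_nil_iff_forall_not_mem]
  intro x hx
  simpa using (h x).1 hx

theorem card_words (n : ℕ) (P : (ℕ → ℕ) → Prop) (S : Set (List Stp))
    (hS : ∀ w, w ∈ S ↔ w.length = n ∧ Valid w ∧ opl w = [] ∧ P (fn w)) :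
    {f | Efn n f ∧ P f}.encard = S.encard := by
  have : {f | Efn n f ∧ P f} = Set.image fn S := by
    ext f
    constructor
    · rintro ⟨hE, hP⟩
      obtain ⟨w, a, b, rfl, d⟩ := word_surj n f ∅ hE.1 hE.2 (by simp)
      exact ⟨w, (hS w).2 ⟨b, a, opl_nil_mem d, hP⟩, rfl⟩
    · rintro ⟨w, hw, rfl⟩
      obtain ⟨rfl, a, b, c⟩ := (hS w).1 hw
      have := fn_facts w a
      exact ⟨⟨this.2.2, this.2.1⟩, c⟩
  rw [this, Set.InjOn.encard_image]
  intro w hw w' hw' h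
  obtain ⟨l1, a1, b1, c1⟩ := (hS w).1 hw
  obtain ⟨l2, a2, b2, c2⟩ := (hS w').1 hw'
  exact word_inj w w' a1 a2 (by omega) h (by simp [b1, b2])

theorem efn_word {w : List Stp} (h : Valid w) : Efn w.length (fn w) :=
  ⟨(fn_facts w h).2.2, (fn_facts w h).2.1⟩

theorem good_word {w : List Stp} (h : Valid w) (h0 : opl w = []) :
    Good (ArcW w) (OpnW w) ↔ ¬ Lf (fn w) ∧ ¬ Gf (fn w) := by
  have hE := efn_word h
  have e1 : Lam (ArcW w) (OpnW w) ↔ Lf (fn w) := by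
    simp only [Lam, Reach, ArcW, OpnW, h0, List.not_mem_nil, false_or, not_false_eq_true, and_true]
    constructor
    · rintro ⟨o, x, y, u, z, a1, a2, a3, ⟨b1, b2, rfl⟩, ⟨c1, c2, rfl⟩, b, ⟨d1, d2, rfl⟩, d3⟩
      exact ⟨o, x, u, a1, b1, a2, c1, a3, d3⟩
    · rintro ⟨o, x, u, a1, a2, a3, a4, a5, a6⟩
      have := hE.lt_of (x := o) (by omega)
      exact ⟨o, x, _, u, _, a1, a3, a5, ⟨a2, by omega, rfl⟩, ⟨a4, by omega, rfl⟩, _, ⟨by omega, this, rfl⟩, a6⟩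
  have e2 : Gam (ArcW w) (OpnW w) ↔ Gf (fn w) := by
    simp only [Gam, Reach, ArcW, OpnW, h0, List.not_mem_nil, false_or, not_false_eq_true, and_true]
    constructor
    · rintro ⟨a, x, c, y, u, z, a1, a2, a3, a4, ⟨b1, b2, rfl⟩, ⟨b, ⟨c1, c2, rfl⟩, c3⟩, ⟨d1, d2, rfl⟩, d, ⟨f1, f2, rfl⟩, f3⟩
      exact ⟨a, x, c, u, a1, a2, a3, a4, d1, c3, f3⟩
    · rintro ⟨a, x, c, u, a1, a2, a3, a4, a5, a6, a7⟩
      have := hE.lt_of (x := a) (by omega)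
      have := hE.lt_of (x := c) (by omega)
      exact ⟨a, x, c, _, u, _, a1, a2, a3, a4, ⟨by omega, by omega, rfl⟩, ⟨_, ⟨by omega, by omega, rfl⟩, a6⟩,
        ⟨a5, by omega, rfl⟩, _, ⟨by omega, by omega, rfl⟩, a7⟩
  simp only [Good, e1, e2]

theorem nst_word {w : List Stp} (h : Valid w) (h0 : opl w = []) :
    Nst (ArcW w) (OpnW w) ↔ Nf (fn w) := by
  have hE := efn_word h
  simp only [Nst, Reach, ArcW, OpnW, h0, List.not_mem_nil, false_or, not_false_eq_true, and_true]
  constructor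
  · rintro ⟨a, x, y, a1, a2, ⟨b1, b2, rfl⟩, b, ⟨c1, c2, rfl⟩, c3⟩
    exact ⟨a, x, a1, a2, c3⟩
  · rintro ⟨a, x, a1, a2, a3⟩
    have := hE.lt_of (x := a) (by omega)
    exact ⟨a, x, _, a1, a2, ⟨a2.le, by omega, rfl⟩, _, ⟨by omega, this, rfl⟩, a3⟩

theorem card_A (n : ℕ) : {f | Efn n f ∧ (¬ Lf f ∧ ¬ Gf f)}.encard = (autSet alB stB [] n []).encard := by
  apply card_words
  intro w
  constructor
  · rintro ⟨h1, h2, h3⟩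
    have hv := accB_valid w h2
    have h0 : opl w = [] := by
      rw [← lab_snd] at h3
      rw [← lab_fst, List.map_eq_nil_iff.1 h3]; rfl
    exact ⟨h1, hv, h0, (good_word hv h0).1 ((acc_good w hv).1.1 h2)⟩
  · rintro ⟨h1, hv, h0, h2⟩
    refine ⟨h1, (acc_good w hv).1.2 ((good_word hv h0).2 h2), ?_⟩
    rw [← lab_snd]
    rw [← lab_fst] at h0
    rw [List.map_eq_nil_iff.1 h0]; rfl

theorem card_B (n : ℕ) : {f | Efn n f ∧ ¬ Nf f}.encard = (autSet alH stH 0 n 0).encard := by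
  apply card_words n (fun f => ¬ Nf f)
  intro w
  constructor
  · rintro ⟨h1, h2, h3⟩
    have hv := accH_valid w h2
    have h0 : opl w = [] := by
      rw [stH_len w hv] at h3
      exact List.length_eq_zero_iff.1 h3
    exact ⟨h1, hv, h0, by rw [← nst_word hv h0]; exact (accH_nst w hv).1 h2⟩
  · rintro ⟨h1, hv, h0, h2⟩
    rw [← nst_word hv h0] at h2
    refine ⟨h1, (accH_nst w hv).2 h2, ?_⟩
    rw [stH_len w hv, h0]; rfl

theorem card_AB (n : ℕ) : {f | Efn n f ∧ (¬ Lf f ∧ ¬ Gf f)}.ncard = {f | Efn n f ∧ ¬ Nf f}.ncard := by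
  obtain ⟨c, hc⟩ := countB n
  obtain ⟨d, hd⟩ := countH n
  have h1 := (hc []).2
  have h2 := (hd 0).2
  have : c [] = d 0 := by
    have : (c [] : ℚ) = d 0 := by rw [h1, h2]; simp [wtB]
    exact_mod_cast this
  unfold Set.ncard
  rw [card_A, card_B, (hc []).1, (hd 0).1, this]

theorem involutions_wilf_equiv_4231_5276143_and_4321 (n : ℕ) :
    Nat.card {σ : Equiv.Perm (Fin n) //
        σ⁻¹ = σ ∧ Avoids σ p4231 ∧ Avoids σ p5276143} =
      Nat.card {σ : Equiv.Perm (Fin n) // σ⁻¹ = σ ∧ Avoids σ p4321} := by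
  have e1 : Nat.card {σ : Equiv.Perm (Fin n) // σ⁻¹ = σ ∧ Avoids σ p4231 ∧ Avoids σ p5276143} =
      Nat.card {σ : Equiv.Perm (Fin n) // σ⁻¹ = σ ∧ (¬ Lf (exf σ) ∧ ¬ Gr (exf σ))} :=
    Nat.card_congr (Equiv.subtypeEquivRight fun σ => and_congr_right fun h => avoid_A h)
  have e2 : Nat.card {σ : Equiv.Perm (Fin n) // σ⁻¹ = σ ∧ Avoids σ p4321} =
      Nat.card {σ : Equiv.Perm (Fin n) // σ⁻¹ = σ ∧ ¬ Nf (exf σ)} :=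
    Nat.card_congr (Equiv.subtypeEquivRight fun σ => and_congr_right fun h => avoid_B h)
  rw [e1, e2, card_perm n (fun f => ¬ Lf f ∧ ¬ Gr f), card_perm n (fun f => ¬ Nf f), ← card_AB]
  apply card_rv
  · intro f hE h
    refine ⟨fun hL => h.1 ?_, fun hG => h.2 ?_⟩
    · have := Lf_rv (rv_Efn hE) hL
      rwa [rv_rv hE] at this
    · have := Gf_rv (rv_Efn hE) hG
      rwa [rv_rv hE] at this
  · intro f hE h
    refine ⟨fun hL => h.1 ?_, fun hG => h.2 ?_⟩
    · have := Lf_rv (rv_Efn hE) hL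
      rwa [rv_rv hE] at this
    · have := Gr_rv (rv_Efn hE) hG
      rwa [rv_rv hE] at this
end

section
/- For every natural number n, the number of involutions of length n avoiding both of the patterns 4231 and 5276143 equals the n-th Motzkin number, i.e., equals the sum over k from 0 to ⌊n/2⌋ of binomial(n, 2k) times the k-th Catalan number. -/
theorem contains4231_intro {n : ℕ} (σ : Equiv.Perm (Fin n)) (p1 p2 p3 p4 : Fin n)
    (h12 : p1 < p2) (h23 : p2 < p3) (h34 : p3 < p4)
    (v1 : σ p4 < σ p2) (v2 : σ p2 < σ p3) (v3 : σ p3 < σ p1) : Contains σ p4231 := by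
  have hf : StrictMono ![p1, p2, p3, p4] := by
    rw [Fin.strictMono_iff_lt_succ]; intro i; fin_cases i <;> simpa
  have hv : StrictMono ![σ p4, σ p2, σ p3, σ p1] := by
    rw [Fin.strictMono_iff_lt_succ]; intro i; fin_cases i <;> simpa
  refine ⟨_, hf, fun a b => ?_⟩
  have key : ∀ a, σ (![p1, p2, p3, p4] a) = ![σ p4, σ p2, σ p3, σ p1] (p4231 a) := by
    intro a; fin_cases a <;> simp [p4231]
  rw [key, key, hv.lt_iff_lt]

theorem contains4231_elim {n : ℕ} (σ : Equiv.Perm (Fin n)) (h : Contains σ p4231) :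
    ∃ p1 p2 p3 p4 : Fin n, p1 < p2 ∧ p2 < p3 ∧ p3 < p4 ∧
      σ p4 < σ p2 ∧ σ p2 < σ p3 ∧ σ p3 < σ p1 := by
  obtain ⟨f, hf, h⟩ := h
  refine ⟨f 0, f 1, f 2, f 3, hf (by decide), hf (by decide), hf (by decide),
    (h _ _).1 ?_, (h _ _).1 ?_, (h _ _).1 ?_⟩ <;> simp [p4231]

theorem contains5276143_intro {n : ℕ} (σ : Equiv.Perm (Fin n)) (p1 p2 p3 p4 p5 p6 p7 : Fin n)
    (h12 : p1 < p2) (h23 : p2 < p3) (h34 : p3 < p4) (h45 : p4 < p5) (h56 : p5 < p6) (h67 : p6 < p7)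
    (v1 : σ p5 < σ p2) (v2 : σ p2 < σ p7) (v3 : σ p7 < σ p6) (v4 : σ p6 < σ p1)
    (v5 : σ p1 < σ p4) (v6 : σ p4 < σ p3) : Contains σ p5276143 := by
  have hf : StrictMono ![p1, p2, p3, p4, p5, p6, p7] := by
    rw [Fin.strictMono_iff_lt_succ]; intro i; fin_cases i <;> simpa
  have hv : StrictMono ![σ p5, σ p2, σ p7, σ p6, σ p1, σ p4, σ p3] := by
    rw [Fin.strictMono_iff_lt_succ]; intro i; fin_cases i <;> simpa
  refine ⟨_, hf, fun a b => ?_⟩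
  have key : ∀ a, σ (![p1, p2, p3, p4, p5, p6, p7] a)
      = ![σ p5, σ p2, σ p7, σ p6, σ p1, σ p4, σ p3] (p5276143 a) := by
    intro a; fin_cases a <;> simp [p5276143]
  rw [key, key, hv.lt_iff_lt]

theorem contains5276143_elim {n : ℕ} (σ : Equiv.Perm (Fin n)) (h : Contains σ p5276143) :
    ∃ p1 p2 p3 p4 p5 p6 p7 : Fin n, p1 < p2 ∧ p2 < p3 ∧ p3 < p4 ∧ p4 < p5 ∧ p5 < p6 ∧ p6 < p7 ∧
      σ p5 < σ p2 ∧ σ p2 < σ p7 ∧ σ p7 < σ p6 ∧ σ p6 < σ p1 ∧ σ p1 < σ p4 ∧ σ p4 < σ p3 := by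
  obtain ⟨f, hf, h⟩ := h
  refine ⟨f 0, f 1, f 2, f 3, f 4, f 5, f 6, hf (by decide), hf (by decide), hf (by decide),
    hf (by decide), hf (by decide), hf (by decide),
    (h _ _).1 ?_, (h _ _).1 ?_, (h _ _).1 ?_, (h _ _).1 ?_, (h _ _).1 ?_, (h _ _).1 ?_⟩ <;>
    simp [p5276143]

/-- Left-to-right maxima that are strict excedances. -/
def IsOp {n : ℕ} (σ : Equiv.Perm (Fin n)) (i : Fin n) : Prop :=
  i < σ i ∧ ∀ j < i, σ j < σ i

theorem IsOp.mono {n : ℕ} {σ : Equiv.Perm (Fin n)} {i j : Fin n} (hj : IsOp σ j)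
    (h : i < j) : σ i < σ j := hj.2 i h

/-- Every excedance which is not a left-to-right maximum lies under one that is. -/
theorem exists_cover {n : ℕ} (σ : Equiv.Perm (Fin n)) (i : Fin n) (h : i < σ i)
    (hi : ¬ IsOp σ i) : ∃ a, IsOp σ a ∧ a < i ∧ σ i < σ a := by
  have h1 : ∃ j, j < i ∧ σ i < σ j := by
    by_contra hc
    push Not at hc
    refine hi ⟨h, fun j hj => lt_of_le_of_ne (hc j hj) fun e => ?_⟩
    exact hj.ne (σ.injective e)
  obtain ⟨j, hj, hs⟩ := h1
  obtain ⟨a, ha, hm⟩ := Finset.exists_max_image (Finset.univ.filter fun j => j < i) σ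
    ⟨j, by simpa using hj⟩
  simp only [Finset.mem_filter, Finset.mem_univ, true_and] at ha hm
  have h2 : σ i < σ a := hs.trans_le (hm j hj)
  refine ⟨a, ⟨ha.trans (h.trans h2), fun j hj => ?_⟩, ha, h2⟩
  exact lt_of_le_of_ne (hm j (hj.trans ha)) fun e => hj.ne (σ.injective e)

/-- A strictly monotone matching of two finite sets is unique. -/
theorem agree_of_mono {n : ℕ} (σ τ : Equiv.Perm (Fin n)) (hσ : ∀ i, σ (σ i) = i)
    (hτ : ∀ i, τ (τ i) = i) (hO : ∀ i, IsOp σ i ↔ IsOp τ i)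
    (hC : ∀ i, IsOp σ (σ i) ↔ IsOp τ (τ i)) (i : Fin n) (hi : IsOp σ i) : σ i = τ i := by
  induction i using WellFoundedLT.induction with
  | ind i ih =>
    by_contra hne
    have main : ∀ σ τ : Equiv.Perm (Fin n), (∀ i, σ (σ i) = i) → (∀ i, τ (τ i) = i) →
        (∀ i, IsOp σ i ↔ IsOp τ i) → (∀ i, IsOp σ (σ i) ↔ IsOp τ (τ i)) → IsOp σ i →
        (∀ j < i, IsOp σ j → σ j = τ j) → ¬ σ i < τ i := by
      intro σ τ hσ hτ hO hC hi ih hlt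
      have h1 : IsOp τ (τ (σ i)) := (hC (σ i)).1 (by rwa [hσ])
      have h2 : τ (σ i) < i := by
        by_contra hge
        have : i ≠ τ (σ i) := fun e => hlt.ne (by rw [← hτ (σ i), ← e])
        have := h1.mono (lt_of_le_of_ne (not_lt.1 hge) this)
        rw [hτ] at this
        exact absurd this hlt.le.not_gt
      have h3 := ih _ h2 ((hO _).2 h1)
      rw [hτ] at h3
      exact h2.ne (σ.injective h3)
    rcases lt_or_gt_of_ne hne with h | h
    · exact main σ τ hσ hτ hO hC hi (fun j hj hoj => ih j hj hoj) h
    · refine main τ σ hτ hσ (fun i => (hO i).symm) (fun i => (hC i).symm) ((hO i).1 hi)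
        (fun j hj hoj => (ih j hj ((hO j).2 hoj)).symm) h

theorem code_inj_aux {n : ℕ} (σ τ : Equiv.Perm (Fin n)) (hσ : ∀ i, σ (σ i) = i)
    (hτ : ∀ i, τ (τ i) = i) (hO : ∀ i, IsOp σ i ↔ IsOp τ i)
    (hC : ∀ i, IsOp σ (σ i) ↔ IsOp τ (τ i)) (av1 : Avoids σ p4231) (av2 : Avoids σ p5276143)
    (z : Fin n) (ih : ∀ y < z, σ y = τ y) (hlt : σ z < τ z) : False := by
  have hA := agree_of_mono σ τ hσ hτ hO hC
  have notO : ¬ IsOp σ z := fun h => hlt.ne (hA z h)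
  have hzw : z ≤ σ z := by
    by_contra hc
    have h1 := ih _ (not_le.1 hc)
    rw [hσ] at h1
    have : τ z = σ z := by rw [h1, hτ, ← h1]
    exact hlt.ne this.symm
  have hzg : z < τ z := hzw.trans_lt hlt
  obtain ⟨a, haτ, haz, hgb⟩ := exists_cover τ z hzg (fun h => notO ((hO z).2 h))
  have ha : IsOp σ a := (hO a).2 haτ
  rw [← hA a ha] at hgb
  set w := σ z with hw
  set g := τ z with hg
  set y := σ g with hy
  have hσg : σ y = g := hσ g
  have hσw : σ w = z := hσ z
  have hyz : z < y := by
    rcases lt_trichotomy y z with h | h | h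
    · have h1 := ih y h
      rw [hσg] at h1
      have : τ g = y := by rw [h1, hτ]
      rw [hg, hτ] at this
      exact absurd h this.symm.not_lt
    · rw [h, ← hw] at hσg
      exact absurd hlt hσg.not_lt
    · exact h
  have no : ∀ r, IsOp σ r → r < w → y < σ r → False := by
    intro r hr hrw hyr
    refine av1 (contains4231_intro σ a z y (σ r) haz hyz hyr ?_ ?_ ?_)
    · rw [hσ]; exact hrw
    · rw [hσg]; exact hlt
    · rw [hσg]; exact hgb
  have haw : a < w := haz.trans_le hzw
  have hby : ¬ y < σ a := fun h => no a ha haw h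
  have hgy : g < y := hgb.trans_le (not_lt.1 hby)
  have hgO : ¬ IsOp σ g := by
    intro h
    have := hA g h
    rw [hg, hτ] at this
    exact absurd hyz (by rw [hy, hg, this]; exact lt_irrefl _)
  obtain ⟨a', ha', hag, hyb⟩ := exists_cover σ g hgy hgO
  have hyb' : y < σ a' := hyb
  have hwa : w < a' := by
    rcases lt_trichotomy a' w with h | h | h
    · exact (no a' ha' h hyb').elim
    · rw [h, hσw] at hyb'
      exact absurd hyz hyb'.le.not_gt
    · exact h
  have hyne : σ a ≠ y := by
    intro e
    have : a = g := by rw [← hσ a, e, hσg]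
    exact absurd (haz.trans hzg) (by rw [this]; exact lt_irrefl _)
  have hby' : σ a < y := lt_of_le_of_ne (not_lt.1 hby) hyne
  refine av2 (contains5276143_intro σ a z a' g (σ a) y (σ a') haz (hzw.trans_lt hwa) hag hgb hby' hyb'
    ?_ ?_ ?_ ?_ ?_ ?_)
  · rw [hσ]; exact haw
  · rw [hσ]; exact hwa
  · rw [hσ, hσg]; exact hag
  · rw [hσg]; exact hgb
  · exact hby'
  · exact hyb'

theorem code_inj {n : ℕ} (σ τ : Equiv.Perm (Fin n)) (hσ : ∀ i, σ (σ i) = i)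
    (hτ : ∀ i, τ (τ i) = i) (hO : ∀ i, IsOp σ i ↔ IsOp τ i)
    (hC : ∀ i, IsOp σ (σ i) ↔ IsOp τ (τ i)) (av1 : Avoids σ p4231) (av2 : Avoids σ p5276143)
    (av1' : Avoids τ p4231) (av2' : Avoids τ p5276143) : σ = τ := by
  ext1 z
  induction z using WellFoundedLT.induction with
  | ind z ih =>
    rcases lt_trichotomy (σ z) (τ z) with h | h | h
    · exact (code_inj_aux σ τ hσ hτ hO hC av1 av2 z ih h).elim
    · exact h
    · exact (code_inj_aux τ σ hτ hσ (fun i => (hO i).symm) (fun i => (hC i).symm) av1' av2' z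
        (fun y hy => (ih y hy).symm) h).elim

/-- Greedy matching: repeatedly match the smallest element with its largest neighbour. -/
theorem greedy {α : Type*} [LinearOrder α] (G : α → α → Prop)
    (Gsymm : ∀ x y, G x y → G y x) (R : Finset α) :
    ∃ μ : α → α, (∀ x ∈ R, μ x ∈ R ∧ μ (μ x) = x ∧ (μ x = x ∨ G x (μ x))) ∧
      (∀ z ∈ R, ∀ z' ∈ R, z < z' → μ z < μ z' → G z (μ z') → G z' (μ z) → False) ∧
      (∀ z₁ ∈ R, ∀ z₂ ∈ R, ∀ z₃ ∈ R, z₁ < z₂ → z₂ < z₃ → μ z₁ < μ z₃ → μ z₃ < μ z₂ →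
        G z₁ (μ z₃) → G z₂ (μ z₁) → False) := by
  classical
  induction R using Finset.strongInduction with
  | H R ih =>
    rcases R.eq_empty_or_nonempty with rfl | hne
    · exact ⟨id, by simp, by simp, by simp⟩
    obtain ⟨z, hz, hmin⟩ := Finset.exists_min_image R id hne
    obtain ⟨g, hg, hmax⟩ := Finset.exists_max_image (R.filter fun y => y = z ∨ G z y) id
      ⟨z, by simp [hz]⟩
    simp only [Finset.mem_filter, id] at hg hmax hmin
    obtain ⟨μ, h1, h2, h3⟩ := ih ((R.erase z).erase g)
      (lt_of_le_of_lt (Finset.erase_subset _ _) (Finset.erase_ssubset hz))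
    have hR : ∀ x ∈ R, x = z ∨ x = g ∨ (x ≠ z ∧ x ≠ g ∧ x ∈ (R.erase z).erase g) := by
      intro x hx
      simp only [Finset.mem_erase]
      tauto
    let ν : α → α := fun x => if x = z then g else if x = g then z else μ x
    have νz : ν z = g := by simp [ν]
    have νg : ν g = z := by
      by_cases h : g = z <;> simp [ν, h]
    have νo : ∀ x, x ≠ z → x ≠ g → ν x = μ x := fun x hx hx' => by simp [ν, hx, hx']
    have hmem : ∀ x ∈ (R.erase z).erase g, μ x ≠ z ∧ μ x ≠ g ∧ μ x ∈ R := by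
      intro x hx
      have := (h1 x hx).1
      simp only [Finset.mem_erase] at this
      tauto
    have νR : ∀ x ∈ R, ν x ∈ R := by
      intro x hx
      rcases hR x hx with rfl | rfl | ⟨a, b, c⟩
      · rw [νz]; exact hg.1
      · rw [νg]; exact hz
      · rw [νo x a b]; exact (hmem x c).2.2
    refine ⟨ν, ?_, ?_, ?_⟩
    · intro x hx
      refine ⟨νR x hx, ?_⟩
      rcases hR x hx with rfl | rfl | ⟨a, b, c⟩
      · rw [νz]; exact ⟨νg, hg.2⟩
      · rw [νg]; exact ⟨νz, hg.2.imp Eq.symm (Gsymm _ _)⟩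
      · obtain ⟨d, e, -⟩ := hmem x c
        rw [νo x a b, νo _ d e]
        exact (h1 x c).2
    · intro x hx x' hx' hlt hv hG hG'
      rcases hR x hx with e | e | ⟨a, b, c⟩
      · rw [e, νz] at hv
        exact absurd hv (hmax _ ⟨νR x' hx', Or.inr (e ▸ hG)⟩).not_gt
      · rw [e] at hlt
        rw [e, νg] at hG'
        exact absurd hlt (hmax _ ⟨hx', Or.inr (Gsymm _ _ hG')⟩).not_gt
      rcases hR x' hx' with e | e | ⟨a', b', c'⟩
      · exact absurd hlt (e ▸ hmin x hx).not_gt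
      · rw [e, νg] at hv
        exact absurd hv (hmin _ (νR x hx)).not_gt
      rw [νo x a b] at hv hG'
      rw [νo x' a' b'] at hv hG
      exact h2 x c x' c' hlt hv hG hG'
    · intro x hx y hy w hw hxy hyw hv1 hv2 hG hG'
      rcases hR x hx with e | e | ⟨a, b, c⟩
      · rw [e, νz] at hv1
        exact absurd hv1 (hmax _ ⟨νR w hw, Or.inr (e ▸ hG)⟩).not_gt
      · rw [e] at hxy
        rw [e, νg] at hG'
        exact absurd hxy (hmax _ ⟨hy, Or.inr (Gsymm _ _ hG')⟩).not_gt
      rcases hR y hy with e | e | ⟨a', b', c'⟩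
      · exact absurd hxy (e ▸ hmin x hx).not_gt
      · rw [e, νg] at hv2
        exact absurd hv2 (hmin _ (νR w hw)).not_gt
      rcases hR w hw with e | e | ⟨a'', b'', c''⟩
      · exact absurd hyw (e ▸ hmin y hy).not_gt
      · rw [e, νg] at hv1
        exact absurd hv1 (hmin _ (νR x hx)).not_gt
      rw [νo x a b] at hv1 hG'
      rw [νo y a' b'] at hv2
      rw [νo w a'' b''] at hv1 hv2 hG
      exact h3 x c y c' w c'' hxy hyw hv1 hv2 hG hG'

theorem construct {n : ℕ} (O C : Finset (Fin n)) (hd : ∀ i ∈ O, i ∉ C) (φ ψ : Fin n → Fin n)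
    (hφ : ∀ a ∈ O, φ a ∈ C ∧ ψ (φ a) = a ∧ a < φ a) (hψ : ∀ c ∈ C, ψ c ∈ O ∧ φ (ψ c) = c)
    (mono : ∀ a ∈ O, ∀ b ∈ O, a < b → φ a < φ b) :
    ∃ σ : Equiv.Perm (Fin n), (∀ i, σ (σ i) = i) ∧ Avoids σ p4231 ∧ Avoids σ p5276143 ∧
      (∀ i, IsOp σ i ↔ i ∈ O) ∧ (∀ i, IsOp σ (σ i) ↔ i ∈ C) := by
  classical
  let G : Fin n → Fin n → Prop := fun x y => ∃ a ∈ O, a < x ∧ a < y ∧ x < φ a ∧ y < φ a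
  obtain ⟨μ, h1, h2, h3⟩ := greedy G (fun x y ⟨a, h, h1, h2, h3, h4⟩ => ⟨a, h, h2, h1, h4, h3⟩)
    (Finset.univ.filter fun i => i ∉ O ∧ i ∉ C)
  simp only [Finset.mem_filter, Finset.mem_univ, true_and] at h1 h2 h3
  let f : Fin n → Fin n := fun i => if i ∈ O then φ i else if i ∈ C then ψ i else μ i
  have fO : ∀ i ∈ O, f i = φ i := fun i hi => by simp [f, hi]
  have fC : ∀ i ∈ C, f i = ψ i := fun i hi => by
    have : i ∉ O := fun h => hd i h hi
    simp [f, hi, this]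
  have fM : ∀ i, i ∉ O → i ∉ C → f i = μ i := fun i hi hi' => by simp [f, hi, hi']
  have ff : Function.Involutive f := by
    intro i
    by_cases hO : i ∈ O
    · rw [fO i hO, fC _ (hφ i hO).1]; exact (hφ i hO).2.1
    by_cases hC : i ∈ C
    · rw [fC i hC, fO _ (hψ i hC).1]; exact (hψ i hC).2
    · have := h1 i ⟨hO, hC⟩
      rw [fM i hO hC, fM _ this.1.1 this.1.2]; exact this.2.1
  let σ : Equiv.Perm (Fin n) := ff.toPerm
  have sσ : ∀ i, σ i = f i := fun i => rfl
  have σσ : ∀ i, σ (σ i) = i := ff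
  have sO : ∀ i ∈ O, σ i = φ i := fO
  have sC : ∀ i ∈ C, σ i = ψ i := fC
  have sM : ∀ i, i ∉ O → i ∉ C → σ i = μ i := fM
  have Olt : ∀ i ∈ O, i < σ i := fun i hi => by rw [sO i hi]; exact (hφ i hi).2.2
  have OC : ∀ i ∈ O, σ i ∈ C := fun i hi => by rw [sO i hi]; exact (hφ i hi).1
  have CO : ∀ i ∈ C, σ i ∈ O := fun i hi => by rw [sC i hi]; exact (hψ i hi).1
  have Clt : ∀ i ∈ C, σ i < i := fun i hi => by
    have := Olt _ (CO i hi); rwa [σσ] at this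
  have monoO : ∀ a ∈ O, ∀ b ∈ O, a < b → σ a < σ b := fun a ha b hb h => by
    rw [sO a ha, sO b hb]; exact mono a ha b hb h
  have monoC : ∀ a ∈ C, ∀ b ∈ C, a < b → σ a < σ b := fun a ha b hb h => by
    by_contra hc
    have hne : σ b ≠ σ a := fun e => h.ne (σ.injective e).symm
    have := monoO _ (CO b hb) _ (CO a ha) (lt_of_le_of_ne (not_lt.1 hc) hne)
    rw [σσ, σσ] at this
    exact absurd h this.not_gt
  have G' : ∀ x y, G x y ↔ ∃ a ∈ O, a < x ∧ a < y ∧ x < σ a ∧ y < σ a := by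
    intro x y
    constructor
    · rintro ⟨a, ha, h⟩; exact ⟨a, ha, by rwa [sO a ha]⟩
    · rintro ⟨a, ha, h⟩; exact ⟨a, ha, by rwa [sO a ha] at h⟩
  have cov : ∀ i, i ∉ O → i ∉ C → σ i = i ∨ ∃ a ∈ O, a < i ∧ a < σ i ∧ i < σ a ∧ σ i < σ a := by
    intro i hO hC
    rw [← G']
    have := (h1 i ⟨hO, hC⟩).2.2
    rwa [← sM i hO hC] at this
  -- weak covering of non-fixed points
  have wcov : ∀ i, σ i ≠ i → ∃ a ∈ O, a ≤ i ∧ a ≤ σ i ∧ i ≤ σ a ∧ σ i ≤ σ a := by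
    intro i hi
    by_cases hO : i ∈ O
    · exact ⟨i, hO, le_rfl, (Olt i hO).le, (Olt i hO).le, le_rfl⟩
    by_cases hC : i ∈ C
    · exact ⟨σ i, CO i hC, (Clt i hC).le, le_rfl, (σσ i).ge, by rw [σσ]; exact (Clt i hC).le⟩
    · obtain h | ⟨a, ha, h1, h2, h3, h4⟩ := cov i hO hC
      · exact absurd h hi
      · exact ⟨a, ha, h1.le, h2.le, h3.le, h4.le⟩
  -- domination
  have domL : ∀ p q, p < q → σ q < σ p → ∃ l ∈ O, l ≤ p ∧ σ p ≤ σ l := by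
    intro p q hpq hs
    by_cases hp : σ p = p
    · have hq : σ q ≠ q := fun e => by rw [e, hp] at hs; exact absurd hpq hs.not_gt
      obtain ⟨a, ha, h1, h2, h3, h4⟩ := wcov q hq
      rw [hp] at hs ⊢
      exact ⟨a, ha, h2.trans hs.le, hpq.le.trans h3⟩
    · obtain ⟨a, ha, h1, h2, h3, h4⟩ := wcov p hp
      exact ⟨a, ha, h1, h4⟩
  have domR : ∀ p q, p < q → σ q < σ p → ∃ r ∈ O, r ≤ σ q ∧ q ≤ σ r := by
    intro p q hpq hs
    obtain ⟨l, hl, h1, h2⟩ := domL (σ q) (σ p) hs (by rwa [σσ, σσ])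
    exact ⟨l, hl, h1, by rwa [σσ] at h2⟩
  have mid : ∀ p q r, p < q → q < r → σ q < σ p → σ r < σ q → q ∉ O ∧ q ∉ C := by
    intro p q r hpq hqr hs hs'
    constructor
    · intro hq
      obtain ⟨l, hl, h1, h2⟩ := domL p q hpq hs
      exact absurd (monoO l hl q hq (h1.trans_lt hpq)) (hs.trans_le h2).not_gt
    · intro hq
      obtain ⟨l, hl, h1, h2⟩ := domR q r hqr hs'
      have := monoC q hq _ (OC l hl) (hqr.trans_le h2)
      rw [σσ] at this
      exact absurd (h1.trans_lt hs') this.not_gt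
  -- neighbours
  have nb : ∀ p q x v, p < q → σ q < σ p → p < x → x < q → σ q < v → v < σ p → G x v := by
    intro p q x v hpq hs hpx hxq hqv hvp
    rw [G']
    rcases le_total x v with h | h
    · obtain ⟨l, hl, h1, h2⟩ := domL p q hpq hs
      have a1 := h1.trans_lt hpx
      have a2 := hvp.trans_le h2
      exact ⟨l, hl, a1, a1.trans_le h, h.trans_lt a2, a2⟩
    · obtain ⟨r, hr, h1, h2⟩ := domR p q hpq hs
      have a1 := h1.trans_lt hqv
      have a2 := hxq.trans_le h2
      exact ⟨r, hr, a1.trans_le h, a1, a2, h.trans_lt a2⟩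
  have opO : ∀ i, IsOp σ i ↔ i ∈ O := by
    intro i
    constructor
    · rintro ⟨hi, hm⟩
      by_contra hO
      by_cases hC : i ∈ C
      · exact absurd hi (Clt i hC).not_gt
      · obtain h | ⟨a, ha, h1, h2, h3, h4⟩ := cov i hO hC
        · exact absurd hi (by rw [h]; exact lt_irrefl _)
        · exact absurd (hm a h1) h4.not_gt
    · intro hi
      refine ⟨Olt i hi, fun j hj => ?_⟩
      by_cases hjf : σ j = j
      · rw [hjf]; exact hj.trans (Olt i hi)
      · obtain ⟨a, ha, h1, h2, h3, h4⟩ := wcov j hjf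
        exact h4.trans_lt (monoO a ha i hi (h1.trans_lt hj))
  refine ⟨σ, σσ, ?_, ?_, opO, ?_⟩
  · intro hc
    obtain ⟨p1, p2, p3, p4, h12, h23, h34, v1, v2, v3⟩ := contains4231_elim σ hc
    have m2 := mid p1 p2 p4 h12 (h23.trans h34) (v2.trans v3) v1
    have m3 := mid p1 p3 p4 (h12.trans h23) h34 v3 (v1.trans v2)
    have h14 := h12.trans (h23.trans h34)
    have v41 := v1.trans (v2.trans v3)
    have g1 := nb p1 p4 p2 (σ p3) h14 v41 h12 (h23.trans h34) (v1.trans v2) v3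
    have g2 := nb p1 p4 p3 (σ p2) h14 v41 (h12.trans h23) h34 v1 (v2.trans v3)
    rw [sM p2 m2.1 m2.2, sM p3 m3.1 m3.2] at v2
    rw [sM p3 m3.1 m3.2] at g1
    rw [sM p2 m2.1 m2.2] at g2
    exact h2 p2 m2 p3 m3 h23 v2 g1 g2
  · intro hc
    obtain ⟨p1, p2, p3, p4, p5, p6, p7, h12, h23, h34, h45, h56, h67, v1, v2, v3, v4, v5, v6⟩ :=
      contains5276143_elim σ hc
    have m2 := mid p1 p2 p5 h12 (by order) (by order) (by order)
    have m4 := mid p3 p4 p5 (by order) (by order) (by order) (by order)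
    have m6 := mid p1 p6 p7 (by order) (by order) (by order) (by order)
    have g1 := nb p1 p5 p2 (σ p6) (by order) (by order) (by order) (by order) (by order) (by order)
    have g2 := nb p1 p5 p4 (σ p2) (by order) (by order) (by order) (by order) (by order) (by order)
    have e1 : σ p2 < σ p6 := by order
    have e2 : σ p6 < σ p4 := by order
    rw [sM p2 m2.1 m2.2] at g2 e1
    rw [sM p6 m6.1 m6.2] at g1 e1 e2
    rw [sM p4 m4.1 m4.2] at e2
    exact h3 p2 m2 p4 m4 p6 m6 (by order) (by order) e1 e2 g1 g2
  · intro i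
    rw [opO]
    constructor
    · intro h; have := OC _ h; rwa [σσ] at this
    · exact CO i

theorem exists_of_ballot {n : ℕ} (O C : Finset (Fin n)) (hd : ∀ i ∈ O, i ∉ C)
    (hcard : O.card = C.card)
    (hb : ∀ i, (C.filter (· ≤ i)).card ≤ (O.filter (· ≤ i)).card) :
    ∃ σ : Equiv.Perm (Fin n), (∀ i, σ (σ i) = i) ∧ Avoids σ p4231 ∧ Avoids σ p5276143 ∧
      (∀ i, IsOp σ i ↔ i ∈ O) ∧ (∀ i, IsOp σ (σ i) ↔ i ∈ C) := by
  classical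
  let e : O ≃o C := (O.orderIsoOfFin rfl).symm.trans (C.orderIsoOfFin hcard.symm)
  let φ : Fin n → Fin n := fun i => if h : i ∈ O then (e ⟨i, h⟩ : Fin n) else i
  let ψ : Fin n → Fin n := fun i => if h : i ∈ C then (e.symm ⟨i, h⟩ : Fin n) else i
  have hφe : ∀ i (h : i ∈ O), φ i = e ⟨i, h⟩ := fun i h => by simp [φ, h]
  have hψe : ∀ i (h : i ∈ C), ψ i = e.symm ⟨i, h⟩ := fun i h => by simp [ψ, h]
  have mono : ∀ a ∈ O, ∀ b ∈ O, a < b → φ a < φ b := by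
    intro a ha b hb h
    rw [hφe a ha, hφe b hb]
    exact e.strictMono (show (⟨a, ha⟩ : O) < ⟨b, hb⟩ from h)
  have φC : ∀ a ∈ O, φ a ∈ C := fun a ha => by rw [hφe a ha]; exact (e ⟨a, ha⟩).2
  refine construct O C hd φ ψ (fun a ha => ⟨φC a ha, ?_, ?_⟩) (fun c hc => ⟨?_, ?_⟩) mono
  · rw [hψe _ (φC a ha)]
    simp [hφe a ha]
  · by_contra hlt
    have hle := not_lt.1 hlt
    have hne : φ a ≠ a := fun h => hd a ha (h ▸ φC a ha)
    have hlt' := lt_of_le_of_ne hle hne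
    have s1 : (O.filter (· ≤ φ a)).card ≤ (C.filter (· < φ a)).card := by
      refine Finset.card_le_card_of_injOn φ ?_ ?_
      · intro x hx
        simp only [Finset.coe_filter, Set.mem_ofPred_eq] at hx ⊢
        exact ⟨φC x hx.1, mono x hx.1 a ha (hx.2.trans_lt hlt')⟩
      · intro x hx y hy hxy
        simp only [Finset.coe_filter, Set.mem_ofPred_eq] at hx hy
        rcases lt_trichotomy x y with h | h | h
        · exact absurd hxy (mono x hx.1 y hy.1 h).ne
        · exact h
        · exact absurd hxy (mono y hy.1 x hx.1 h).ne'
    have s2 : (C.filter (· < φ a)).card < (C.filter (· ≤ φ a)).card := by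
      refine Finset.card_lt_card ⟨?_, ?_⟩
      · intro x hx
        simp only [Finset.mem_filter] at hx ⊢
        exact ⟨hx.1, hx.2.le⟩
      · intro h
        have := h (x := φ a) (by simp [φC a ha])
        simp at this
    have := hb (φ a)
    omega
  · rw [hψe c hc]; exact (e.symm ⟨c, hc⟩).2
  · rw [hψe c hc, hφe _ (e.symm ⟨c, hc⟩).2]
    simp

theorem count_reduceOption {α : Type*} [BEq α] [LawfulBEq α] (x : α) (l : List (Option α)) :
    l.reduceOption.count x = l.count (some x) := by
  induction l with
  | nil => simp
  | cons a l ih =>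
    cases a with
    | none => simp [List.reduceOption_cons_of_none, ih]
    | some y =>
      simp [List.reduceOption_cons_of_some, List.count_cons, ih]
      congr

theorem take_reduceOption {α : Type*} (l : List (Option α)) (i : ℕ) :
    ∃ m, l.reduceOption.take i = (l.take m).reduceOption := by
  induction l generalizing i with
  | nil => exact ⟨0, by simp⟩
  | cons a l ih =>
    cases a with
    | none =>
      obtain ⟨m, hm⟩ := ih i
      exact ⟨m + 1, by simpa [List.reduceOption_cons_of_none] using hm⟩
    | some y =>
      cases i with
      | zero => exact ⟨0, by simp⟩
      | succ i =>
        obtain ⟨m, hm⟩ := ih i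
        exact ⟨m + 1, by simpa [List.reduceOption_cons_of_some] using hm⟩

theorem reduceOption_take {α : Type*} (l : List (Option α)) (m : ℕ) :
    ∃ i, (l.take m).reduceOption = l.reduceOption.take i := by
  have h : (l.take m).reduceOption <+: l.reduceOption := (List.take_prefix m l).reduceOption
  exact ⟨_, List.prefix_iff_eq_take.1 h⟩

theorem count_take_ofFn {α : Type*} [BEq α] [LawfulBEq α] [DecidableEq α] (x : α) {n : ℕ} (f : Fin n → α) (m : ℕ) :
    ((List.ofFn f).take m).count x = (Finset.univ.filter fun i : Fin n => f i = x ∧ i.1 < m).card := by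
  induction n generalizing m with
  | zero => simp
  | succ n ih =>
    cases m with
    | zero => simp
    | succ m =>
      rw [List.ofFn_succ, List.take_succ_cons, List.count_cons, ih, Fin.card_filter_univ_succ']
      simp [add_comm]

/-- Lists of length `n` whose non-blank entries spell `d`. -/
def Spell {α : Type*} (n : ℕ) (d : List α) : Set (List (Option α)) :=
  {l | l.length = n ∧ l.reduceOption = d}

theorem spell_card {α : Type*} (n : ℕ) (d : List α) :
    (Spell n d).Finite ∧ (Spell n d).ncard = n.choose d.length := by
  induction n generalizing d with
  | zero =>
    cases d with
    | nil =>
      have : Spell 0 ([] : List α) = {[]} := by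
        ext l
        simp only [Spell, Set.mem_ofPred_eq, Set.mem_singleton_iff, List.length_eq_zero_iff]
        exact ⟨fun h => h.1, fun h => by simp [h]⟩
      rw [this]
      simp
    | cons x d =>
      have : Spell 0 (x :: d) = ∅ := by
        ext l
        simp only [Spell, Set.mem_ofPred_eq, List.length_eq_zero_iff, Set.mem_empty_iff_false,
          iff_false]
        rintro ⟨rfl, h⟩
        simp at h
      rw [this]
      simp
  | succ n ih =>
    have inj : ∀ a : Option α, Function.Injective (fun l : List (Option α) => a :: l) :=
      fun a => List.cons_injective
    cases d with
    | nil =>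
      have : Spell (n + 1) ([] : List α) = Set.image (fun l => none :: l) (Spell n []) := by
        ext l
        simp only [Spell, Set.mem_ofPred_eq, Set.mem_image]
        cases l with
        | nil => simp
        | cons a l => cases a <;> simp [List.reduceOption_cons_of_none, List.reduceOption_cons_of_some]
      rw [this]
      refine ⟨(ih []).1.image _, ?_⟩
      rw [Set.ncard_image_of_injective _ (inj none), (ih []).2]
      simp
    | cons x d =>
      have : Spell (n + 1) (x :: d) =
          Set.image (fun l => none :: l) (Spell n (x :: d)) ∪ Set.image (fun l => some x :: l) (Spell n d) := by
        ext l
        simp only [Spell, Set.mem_ofPred_eq, Set.mem_image, Set.mem_union]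
        cases l with
        | nil => simp
        | cons a l =>
          cases a
          · simp [List.reduceOption_cons_of_none]
          · simp [List.reduceOption_cons_of_some]
            tauto
      rw [this]
      have f1 := (ih (x :: d)).1.image (fun l => none :: l)
      have f2 := (ih d).1.image (fun l => some x :: l)
      refine ⟨f1.union f2, ?_⟩
      rw [Set.ncard_union_eq ?_ f1 f2, Set.ncard_image_of_injective _ (inj none),
        Set.ncard_image_of_injective _ (inj (some x)), (ih _).2, (ih _).2]
      · simp only [List.length_cons]
        rw [Nat.choose_succ_succ, add_comm]
      · rw [Set.disjoint_left]
        rintro _ ⟨l, -, rfl⟩ ⟨l', -, h⟩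
        simp at h

/-- Motzkin words. -/
def MotzkinWord (n : ℕ) : Type :=
  {l : List (Option DyckStep) // l.length = n ∧ ∃ p : DyckWord, p.toList = l.reduceOption}

theorem card_motzkinWord (n : ℕ) : Nat.card (MotzkinWord n) =
    ∑ k ∈ Finset.range (n / 2 + 1), Nat.choose n (2 * k) * catalan k := by
  let T := Σ k : Fin (n / 2 + 1), Σ p : {p : DyckWord // p.semilength = k.1}, Spell n p.1.toList
  let F : T → MotzkinWord n := fun x => ⟨x.2.2.1, x.2.2.2.1, x.2.1.1, x.2.2.2.2.symm⟩
  have hF : Function.Bijective F := by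
    constructor
    · rintro ⟨⟨k, hk⟩, ⟨p, hp⟩, ⟨l, hl, hlp⟩⟩ ⟨⟨k', hk'⟩, ⟨p', hp'⟩, ⟨l', hl', hlp'⟩⟩ h
      have e : l = l' := congrArg Subtype.val h
      subst e
      have e2 : p = p' := DyckWord.ext (hlp.symm.trans hlp')
      subst e2
      simp only at hp hp'
      subst hp
      subst hp'
      rfl
    · rintro ⟨l, hl, p, hp⟩
      have h1 := p.two_mul_semilength_eq_length
      have h2 := List.reduceOption_length_le l
      rw [← hp, hl] at h2
      exact ⟨⟨⟨p.semilength, by omega⟩, ⟨p, rfl⟩, ⟨l, hl, hp.symm⟩⟩, rfl⟩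
  rw [← Nat.card_eq_of_bijective F hF]
  have fin : ∀ d : List DyckStep, Finite (Spell n d) := fun d => (spell_card n d).1
  have inner : ∀ k : Fin (n / 2 + 1),
      Nat.card (Σ p : {p : DyckWord // p.semilength = k.1}, Spell n p.1.toList)
        = n.choose (2 * k.1) * catalan k.1 := by
    intro k
    rw [Nat.card_sigma]
    have : ∀ p : {p : DyckWord // p.semilength = k.1},
        Nat.card (Spell n p.1.toList) = n.choose (2 * k.1) := by
      rintro ⟨p, hp⟩
      rw [Nat.card_coe_set_eq, (spell_card n _).2, ← p.two_mul_semilength_eq_length, hp]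
    rw [Finset.sum_congr rfl fun p _ => this p, Finset.sum_const, Finset.card_univ,
      DyckWord.card_dyckWord_semilength_eq_catalan, smul_eq_mul, mul_comm]
  rw [Nat.card_sigma, Finset.sum_congr rfl fun k _ => inner k,
    Finset.sum_range fun k => n.choose (2 * k) * catalan k]

open Classical in
/-- The word of an involution. -/
noncomputable def code {n : ℕ} (σ : Equiv.Perm (Fin n)) (i : Fin n) : Option DyckStep :=
  if IsOp σ i then some DyckStep.U else if IsOp σ (σ i) then some DyckStep.D else none

theorem code_U {n : ℕ} (σ : Equiv.Perm (Fin n)) (i : Fin n) :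
    code σ i = some DyckStep.U ↔ IsOp σ i := by
  unfold code
  split_ifs <;> simp_all

theorem code_D {n : ℕ} (σ : Equiv.Perm (Fin n)) (hσ : ∀ i, σ (σ i) = i) (i : Fin n) :
    code σ i = some DyckStep.D ↔ IsOp σ (σ i) := by
  unfold code
  split_ifs with h1 h2
  · simp only [Option.some.injEq, reduceCtorEq, false_iff]
    intro h2
    have := h2.1
    rw [hσ] at this
    exact absurd h1.1 this.not_gt
  · simp [h2]
  · simp [h2]

theorem code_dyck {n : ℕ} (σ : Equiv.Perm (Fin n)) (hσ : ∀ i, σ (σ i) = i) :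
    ∃ p : DyckWord, p.toList = (List.ofFn (code σ)).reduceOption := by
  have le : ∀ m, ((List.ofFn (code σ)).take m).count (some DyckStep.D) ≤
      ((List.ofFn (code σ)).take m).count (some DyckStep.U) := by
    intro m
    rw [count_take_ofFn, count_take_ofFn]
    refine Finset.card_le_card_of_injOn σ ?_ σ.injective.injOn
    intro i hi
    simp only [Finset.coe_filter, Finset.mem_univ, true_and, Set.mem_ofPred_eq, code_U,
      code_D σ hσ] at hi ⊢
    refine ⟨hi.1, lt_trans ?_ hi.2⟩
    have := hi.1.1
    rwa [hσ] at this
  have ge : (List.ofFn (code σ)).count (some DyckStep.U) ≤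
      (List.ofFn (code σ)).count (some DyckStep.D) := by
    rw [← List.take_of_length_le (l := List.ofFn (code σ)) (i := n) (by simp)]
    rw [count_take_ofFn, count_take_ofFn]
    refine Finset.card_le_card_of_injOn σ ?_ σ.injective.injOn
    intro i hi
    simp only [Finset.coe_filter, Finset.mem_univ, true_and, Set.mem_ofPred_eq, code_U,
      code_D σ hσ] at hi ⊢
    exact ⟨by rw [hσ]; exact hi.1, (σ i).2⟩
  refine ⟨⟨(List.ofFn (code σ)).reduceOption, ?_, ?_⟩, rfl⟩
  · rw [count_reduceOption, count_reduceOption]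
    refine le_antisymm ge ?_
    have := le n
    rwa [List.take_of_length_le (by simp)] at this
  · intro i
    obtain ⟨m, hm⟩ := take_reduceOption (List.ofFn (code σ)) i
    rw [hm, count_reduceOption, count_reduceOption]
    exact le m

theorem code_surj {n : ℕ} (f : Fin n → Option DyckStep)
    (h : ∃ p : DyckWord, p.toList = (List.ofFn f).reduceOption) :
    ∃ σ : Equiv.Perm (Fin n), (∀ i, σ (σ i) = i) ∧ Avoids σ p4231 ∧ Avoids σ p5276143 ∧
      code σ = f := by
  obtain ⟨p, hp⟩ := h
  have key : ∀ m, ((List.ofFn f).take m).count (some DyckStep.D) ≤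
      ((List.ofFn f).take m).count (some DyckStep.U) := by
    intro m
    obtain ⟨i, hi⟩ := reduceOption_take (List.ofFn f) m
    rw [← count_reduceOption, ← count_reduceOption, hi, ← hp]
    exact p.count_D_le_count_U i
  have tot : ((List.ofFn f).take n).count (some DyckStep.U) =
      ((List.ofFn f).take n).count (some DyckStep.D) := by
    rw [List.take_of_length_le (by simp), ← count_reduceOption, ← count_reduceOption, ← hp]
    exact p.count_U_eq_count_D
  obtain ⟨σ, hσ, a1, a2, hO, hC⟩ := exists_of_ballot
    (Finset.univ.filter fun i => f i = some DyckStep.U)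
    (Finset.univ.filter fun i => f i = some DyckStep.D)
    (by intro i hi; simp only [Finset.mem_filter, Finset.mem_univ, true_and] at hi ⊢; simp [hi])
    (by simpa [count_take_ofFn] using tot)
    (by
      intro i
      have := key (i.1 + 1)
      rw [count_take_ofFn, count_take_ofFn] at this
      simpa only [Finset.filter_filter, Nat.lt_succ_iff, Fin.le_def] using this)
  refine ⟨σ, hσ, a1, a2, ?_⟩
  simp only [Finset.mem_filter, Finset.mem_univ, true_and] at hO hC
  funext i
  have e1 := (code_U σ i).trans (hO i)
  have e2 := (code_D σ hσ i).trans (hC i)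
  rcases hf : f i with _ | _ | _ <;> rcases hc : code σ i with _ | _ | _ <;>
    simp [hf, hc] at e1 e2 ⊢

theorem involutions_avoiding_4231_5276143_motzkin (n : ℕ) :
    Nat.card {σ : Equiv.Perm (Fin n) //
        σ⁻¹ = σ ∧ Avoids σ p4231 ∧ Avoids σ p5276143} =
      ∑ k ∈ Finset.range (n / 2 + 1), Nat.choose n (2 * k) * catalan k := by
  rw [← card_motzkinWord]
  have inv : ∀ σ : Equiv.Perm (Fin n), σ⁻¹ = σ ↔ ∀ i, σ (σ i) = i := by
    intro σ
    rw [inv_eq_iff_mul_eq_one, Equiv.ext_iff]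
    rfl
  refine Nat.card_eq_of_bijective
    (fun σ => ⟨List.ofFn (code σ.1), by simp, code_dyck σ.1 ((inv _).1 σ.2.1)⟩) ⟨?_, ?_⟩
  · rintro ⟨σ, hσ, a1, a2⟩ ⟨τ, hτ, b1, b2⟩ h
    have h' : code σ = code τ := List.ofFn_injective (congrArg Subtype.val h)
    rw [inv] at hσ hτ
    apply Subtype.ext
    refine code_inj σ τ hσ hτ (fun i => ?_) (fun i => ?_) a1 a2 b1 b2
    · rw [← code_U, ← code_U, h']
    · rw [← code_D σ hσ, ← code_D τ hτ, h']
  · rintro ⟨l, hl, hp⟩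
    subst hl
    rw [← List.ofFn_get l] at hp
    obtain ⟨σ, hσ, a1, a2, hc⟩ := code_surj l.get hp
    refine ⟨⟨σ, (inv σ).2 hσ, a1, a2⟩, Subtype.ext ?_⟩
    simp only [hc]
    exact List.ofFn_get l
end
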